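/- For every integer r ≥ 2 and every harmonious pair {P, Q} of distinct r-patterns, asymptotically almost surely z_{{P,Q}}(RM_n^(r)) = Θ(n^(1/(r−1))); that is, there exist constants c₁, c₂ > 0 (depending only on r, P, Q) such that the probability that c₁·n^(1/(r−1)) ≤ z_{{P,Q}}(RM_n^(r)) ≤ c₂·n^(1/(r−1)) tends to 1 as n → ∞. -/

import Mathlib

open Finset
open scoped Classical

/-- An ordered `r`-matching of size `n`: a partition of `[r*n] = {1,…,r*n}` into `n`
pairwise disjoint `r`-element subsets (the edges). -/
def IsOrderedMatching (r n : ℕ) (M : Finset (Finset ℕ)) : Prop :=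
  M.card = n ∧ (∀ e ∈ M, e.card = r) ∧
  (∀ e ∈ M, ∀ f ∈ M, e ≠ f → Disjoint e f) ∧
  M.biUnion id = Finset.Icc 1 (r * n)

/-- Two disjoint `r`-element sets `e`, `f` form the `r`-pattern `P`: the unique
order-preserving bijection from `e ∪ f` onto `[2r]` maps the pair `{e, f}` onto `P`. -/
def FormsPattern (r : ℕ) (e f : Finset ℕ) (P : Finset (Finset ℕ)) : Prop :=
  ∃ φ : ℕ → ℕ, StrictMonoOn φ ↑(e ∪ f) ∧
    (e ∪ f).image φ = Finset.Icc 1 (2 * r) ∧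
    ({e.image φ, f.image φ} : Finset (Finset ℕ)) = P

/-- A `Ps`-clique: a family of pairwise disjoint `r`-element subsets of `ℕ`, every two of
which form a pattern belonging to `Ps`. -/
def IsClique (r : ℕ) (Ps : Set (Finset (Finset ℕ))) (K : Finset (Finset ℕ)) : Prop :=
  (∀ e ∈ K, e.card = r) ∧ (∀ e ∈ K, ∀ f ∈ K, e ≠ f → Disjoint e f) ∧
  (∀ e ∈ K, ∀ f ∈ K, e ≠ f → ∃ P ∈ Ps, FormsPattern r e f P)

/-- `z_Ps(M)`: the maximum size of a subfamily of `M` that is a `Ps`-clique. -/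
noncomputable def zClique (r : ℕ) (Ps : Set (Finset (Finset ℕ))) (M : Finset (Finset ℕ)) : ℕ :=
  sSup {k | ∃ K : Finset (Finset ℕ), K ⊆ M ∧ IsClique r Ps K ∧ K.card = k}

/-- All ordered `r`-matchings of size `n` (as a finset). -/
noncomputable def matchingFamilies (r n : ℕ) : Finset (Finset (Finset ℕ)) :=
  ((Finset.Icc 1 (r * n)).powerset.powerset).filter (IsOrderedMatching r n)

/-- The probability of the event `A` for a uniformly random ordered `r`-matching of size `n`. -/
noncomputable def prob (r n : ℕ) (A : Finset (Finset ℕ) → Prop) : ℝ :=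
  (((matchingFamilies r n).filter A).card : ℝ) / ((matchingFamilies r n).card : ℝ)

/-- Expectation of `X` with respect to a uniformly random ordered `r`-matching of size `n`. -/
noncomputable def expect (r n : ℕ) (X : Finset (Finset ℕ) → ℝ) : ℝ :=
  (∑ M ∈ matchingFamilies r n, X M) / ((matchingFamilies r n).card : ℝ)

/-- An `r`-partite `r`-pattern: each edge contains exactly one of `{2i-1, 2i}` for each
`i = 1, …, r`. -/
def IsPartitePattern (r : ℕ) (P : Finset (Finset ℕ)) : Prop :=
  IsOrderedMatching r 2 P ∧
  ∀ e ∈ P, ∀ i ∈ Finset.Icc 1 r, (e ∩ {2 * i - 1, 2 * i}).card = 1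

/-- An `r`-pattern `P` is collectable if there exist arbitrarily large `{P}`-cliques. -/
def Collectable (r : ℕ) (P : Finset (Finset ℕ)) : Prop :=
  ∀ k : ℕ, ∃ K : Finset (Finset ℕ), IsClique r {P} K ∧ K.card = k

/-- The word of a pattern `P` over `{A=true, B=false}`: the `j`-th letter is `true` iff
vertex `j` lies in the edge of `P` containing `1`. -/
noncomputable def patternWord (r : ℕ) (P : Finset (Finset ℕ)) : List Bool :=
  (List.range (2 * r)).map (fun j => decide (∃ e ∈ P, 1 ∈ e ∧ j + 1 ∈ e))

/-- `lam` is a splitting of the word `w` into consecutive blocks of the form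
`A^t B^t` or `B^t A^t` with half-lengths given by `lam`. -/
def IsBlockSplitting (w : List Bool) (lam : List ℕ) : Prop :=
  (∀ t ∈ lam, 1 ≤ t) ∧
  ∃ bs : List Bool, bs.length = lam.length ∧
    w = (List.zipWith (fun t b => List.replicate t b ++ List.replicate t !b) lam bs).flatten

/-- The pattern `P` has composition `lam` (the sequence of half-lengths of the blocks of
its unique splitting). -/
def HasComposition (r : ℕ) (P : Finset (Finset ℕ)) (lam : List ℕ) : Prop :=
  IsBlockSplitting (patternWord r P) lam

/-- Two distinct collectable `r`-patterns are harmonious if they have the same composition. -/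
def Harmonious (r : ℕ) (P Q : Finset (Finset ℕ)) : Prop :=
  P ≠ Q ∧ Collectable r P ∧ Collectable r Q ∧
  ∃ lam : List ℕ, HasComposition r P lam ∧ HasComposition r Q lam

/-- A pair of distinct `r`-patterns is a mismatch if exactly one of them is collectable, or
both are collectable but their compositions differ. -/
def Mismatch (r : ℕ) (P Q : Finset (Finset ℕ)) : Prop :=
  P ≠ Q ∧
  ((Collectable r P ∧ ¬ Collectable r Q) ∨
   (¬ Collectable r P ∧ Collectable r Q) ∨
   (Collectable r P ∧ Collectable r Q ∧
     ¬ ∃ lam : List ℕ, HasComposition r P lam ∧ HasComposition r Q lam))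

/-- The trace of an ordered `r`-matching of size `k` on `[rk]`: the `j`-th letter equals
`i` when `j` is the `i`-th smallest element of the edge containing `j`. -/
noncomputable def trace (r k : ℕ) (M : Finset (Finset ℕ)) : List ℕ :=
  (List.range (r * k)).map (fun j₀ =>
    ((Finset.Icc 1 (r * k)).filter
      (fun x => x ≤ j₀ + 1 ∧ ∃ e ∈ M, j₀ + 1 ∈ e ∧ x ∈ e)).card)

/-- `a_Ps(k)`: the number of `Ps`-cliques of size `k` whose edges partition `[rk]`. -/
noncomputable def cliqueCount (r : ℕ) (Ps : Set (Finset (Finset ℕ))) (k : ℕ) : ℕ :=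
  (((Finset.Icc 1 (r * k)).powerset.powerset).filter
    (fun M => IsOrderedMatching r k M ∧ IsClique r Ps M)).card

/-- The maximum size of any `Ps`-clique whatsoever. -/
noncomputable def maxCliqueSize (r : ℕ) (Ps : Set (Finset (Finset ℕ))) : ℕ :=
  sSup {k | ∃ K : Finset (Finset ℕ), IsClique r Ps K ∧ K.card = k}

/-- `M` contains a copy of the ordered `r`-matching `H` of size `k`: a subfamily `N ⊆ M` of
`k` edges such that the order-preserving bijection from the union of the edges of `N`
onto `[rk]` maps `N` onto `H`. -/
def ContainsCopy (r k : ℕ) (H M : Finset (Finset ℕ)) : Prop :=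
  ∃ N ⊆ M, N.card = k ∧ ∃ φ : ℕ → ℕ,
    StrictMonoOn φ ↑(N.biUnion id) ∧
    (N.biUnion id).image φ = Finset.Icc 1 (r * k) ∧
    N.image (fun e => e.image φ) = H

/-- Delete the `j`-th smallest element of the finite set `e`. -/
def deleteJth (j : ℕ) (e : Finset ℕ) : Finset ℕ :=
  e.filter (fun x => (e.filter (· ≤ x)).card ≠ j)

/-- Relabel the elements of `e` order-preservingly by their ranks in `V`. -/
def relabel (V : Finset ℕ) (e : Finset ℕ) : Finset ℕ :=
  e.image (fun x => (V.filter (· ≤ x)).card)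

/-- `S^(−j)`: delete from each edge of the pattern `S` its `j`-th smallest element and
relabel the remaining vertices order-preservingly. -/
def patternDelete (j : ℕ) (S : Finset (Finset ℕ)) : Finset (Finset ℕ) :=
  (S.image (deleteJth j)).image (relabel ((S.image (deleteJth j)).biUnion id))

/-!
Let `P ≠ Q` have the same composition, so that their words split into the same blocks and differ
only in the signs (`AᵗBᵗ` or `BᵗAᵗ`), say in the block of the `d`-th letters.

Upper bound: order the edges of a `{P, Q}`-clique of size `k` by their first vertices. Which of the
two patterns a pair forms is then visible from its `d`-th vertices alone, so a clique is determined
by its vertex set and one permutation of `k`. Hence `rk` vertices carry at most `k!` cliques, which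
is so few of their `(rk)! / (r!ᵏ k!)` matchings that, by the first moment method, a random matching
contains no clique of size `k` if `k` is a large multiple of `n ^ (1 / (r - 1))`.

Lower bound: with `m = ⌊n ^ (1 / (r - 1))⌋`, cut the vertices into `r m` cells of length about
`n / m`, one for each coordinate and each of `m` levels. An edge of type `(j, j')` takes its
vertices from level `j` in the blocks where the signs agree and from level `j'` in the others,
counting levels from above in the blocks with sign `BᵗAᵗ` in `P`. Edges whose types differ in both
components then form `P` or `Q`. Expose the edges of a random matching one at a time, each at a
vertex chosen such that the new edge extends the clique with probability at least a constant times
`m / n`. After about `n / (16 r)` exposures the clique has size of order `m`, except with a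
probability exponentially small in `m`.
-/

section Order

variable {ι α : Type*} [LinearOrder α] {f g : ι → α}

lemma eq_of_range_eq_of_lt_iff_lt [Finite ι] (hf : f.Injective) (hrange : Set.range f = Set.range g)
    (hlt : ∀ i j, f i < f j ↔ g i < g j) : f = g := by
  let : LinearOrder ι := LinearOrder.lift' f hf
  have hf_mono : StrictMono f := fun _ _ h => h
  have hg_mono : StrictMono g := fun i j h => (hlt i j).1 h
  exact (hf_mono.range_inj hg_mono).1 hrange

lemma exists_strictMonoOn_comp_eq [Nonempty α] (hf : f.Injective)
    (hlt : ∀ i j, f i < f j → g i < g j) :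
    ∃ φ : α → α, StrictMonoOn φ (Set.range f) ∧ φ ∘ f = g := by
  refine ⟨Function.extend f g fun _ => Classical.arbitrary α, ?_,
    funext fun i => hf.extend_apply _ _ i⟩
  rintro _ ⟨i, rfl⟩ _ ⟨j, rfl⟩ hij
  simpa only [hf.extend_apply] using hlt i j hij

lemma image_univ_inj_of_strictMono [Fintype ι] [LinearOrder ι] [DecidableEq α] (hf : StrictMono f)
    (hg : StrictMono g) : univ.image f = univ.image g ↔ f = g := by
  rw [← coe_inj, coe_image, coe_image, coe_univ, Set.image_univ, Set.image_univ, hf.range_inj hg]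

lemma lt_iff_lt_of_sort_eq {k : ℕ} {f g : Fin k → α} (hf : f.Injective) (hg : g.Injective)
    (h : Tuple.sort f = Tuple.sort g) (i j : Fin k) : f i < f j ↔ g i < g j := by
  have hf_mono := (Tuple.monotone_sort f).strictMono_of_injective
    (hf.comp (Tuple.sort f).injective)
  have hg_mono := (Tuple.monotone_sort g).strictMono_of_injective
    (hg.comp (Tuple.sort g).injective)
  rw [← h] at hg_mono
  have hfs := hf_mono.lt_iff_lt (a := (Tuple.sort f).symm i) (b := (Tuple.sort f).symm j)
  have hgs := hg_mono.lt_iff_lt (a := (Tuple.sort f).symm i) (b := (Tuple.sort f).symm j)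
  simp only [Function.comp_apply, Equiv.apply_symm_apply] at hfs hgs
  rw [hfs, hgs]

end Order

section Shape

variable {r : ℕ} {β : Fin r → ℕ} {σ τ : ℕ → Bool} {P Q : Finset (Finset ℕ)}
  {x y x' y' : Fin r → ℕ}

/-- In a word of blocks `AᵗBᵗ` (sign `true`) and `BᵗAᵗ` (sign `false`), the `a`-th letter `A`
precedes the `b`-th letter `B`. Here `β a` is the index of the block holding the `a`-th letter `A`
and the `a`-th letter `B`, and `σ i` is the sign of the `i`-th block. -/
def Precedes (β : Fin r → ℕ) (σ : ℕ → Bool) (a b : Fin r) : Prop :=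
  β a < β b ∨ β a = β b ∧ σ (β a) = true

/-- The increasing tuples `x` and `y` are in the relative position of the letters `A` and `B` in
the word with block indices `β` and signs `σ`. -/
def Interlaced (β : Fin r → ℕ) (σ : ℕ → Bool) (x y : Fin r → ℕ) : Prop :=
  ∀ a b, x a ≠ y b ∧ (x a < y b ↔ Precedes β σ a b)

/-- The word of the `r`-pattern `P` is the word with block indices `β` and signs `σ`. -/
def HasShape (r : ℕ) (P : Finset (Finset ℕ)) (β : Fin r → ℕ) (σ : ℕ → Bool) : Prop :=
  ∃ x y : Fin r → ℕ, StrictMono x ∧ StrictMono y ∧ Interlaced β σ x y ∧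
    P = {univ.image x, univ.image y} ∧ univ.image x ∪ univ.image y = Icc 1 (2 * r)

lemma precedes_self {a : Fin r} : Precedes β σ a a ↔ σ (β a) = true := by
  simp [Precedes]

lemma precedes_congr (h : ∀ a, σ (β a) = τ (β a)) {a b : Fin r} :
    Precedes β σ a b ↔ Precedes β τ a b := by
  simp only [Precedes, h]

lemma Interlaced.disjoint (h : Interlaced β σ x y) : Disjoint (univ.image x) (univ.image y) := by
  simp only [disjoint_left, mem_image, mem_univ, true_and]
  rintro _ ⟨a, rfl⟩ ⟨b, hb⟩
  exact (h a b).1 hb.symm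

lemma Interlaced.injective_elim (h : Interlaced β σ x y) (hx : StrictMono x) (hy : StrictMono y) :
    (Sum.elim x y).Injective :=
  hx.injective.sumElim hy.injective fun a b => (h a b).1

lemma Interlaced.elim_lt_elim_iff (h : Interlaced β σ x y) (h' : Interlaced β σ x' y')
    (hx : StrictMono x) (hy : StrictMono y) (hx' : StrictMono x') (hy' : StrictMono y')
    (s t : Fin r ⊕ Fin r) :
    Sum.elim x y s < Sum.elim x y t ↔ Sum.elim x' y' s < Sum.elim x' y' t := by
  rcases s with a | a <;> rcases t with b | b
  · exact hx.lt_iff_lt.trans hx'.lt_iff_lt.symm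
  · exact (h a b).2.trans (h' a b).2.symm
  · have hiff := (h b a).2.trans (h' b a).2.symm
    have hne := (h b a).1
    have hne' := (h' b a).1
    simp only [Sum.elim_inl, Sum.elim_inr]
    omega
  · exact hy.lt_iff_lt.trans hy'.lt_iff_lt.symm

lemma Interlaced.of_comp {φ : ℕ → ℕ} (h : Interlaced β σ (φ ∘ x) (φ ∘ y))
    (hφ : StrictMonoOn φ ↑(univ.image x ∪ univ.image y)) : Interlaced β σ x y := by
  intro a b
  have hx : x a ∈ (↑(univ.image x ∪ univ.image y) : Set ℕ) := by simp
  have hy : y b ∈ (↑(univ.image x ∪ univ.image y) : Set ℕ) := by simp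
  exact ⟨fun hab => (h a b).1 (congrArg φ hab), (hφ.lt_iff_lt hx hy).symm.trans (h a b).2⟩

lemma exists_common_interlaced {d : Fin r} (hd : σ (β d) ≠ τ (β d))
    (h : Interlaced β σ x y ∨ Interlaced β τ x y)
    (h' : Interlaced β σ x' y' ∨ Interlaced β τ x' y')
    (hiff : x d < y d ↔ x' d < y' d) :
    ∃ ρ, Interlaced β ρ x y ∧ Interlaced β ρ x' y' := by
  rcases h with h | h <;> rcases h' with h' | h'
  · exact ⟨σ, h, h'⟩
  · rw [(h d d).2, (h' d d).2, precedes_self, precedes_self, ← Bool.eq_iff_iff] at hiff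
    exact absurd hiff hd
  · rw [(h d d).2, (h' d d).2, precedes_self, precedes_self, ← Bool.eq_iff_iff] at hiff
    exact absurd hiff.symm hd
  · exact ⟨τ, h, h'⟩

lemma HasShape.unique (hP : HasShape r P β σ) (hQ : HasShape r Q β τ)
    (hsign : ∀ a, σ (β a) = τ (β a)) : P = Q := by
  obtain ⟨x, y, hx, hy, hxy, rfl, hcover⟩ := hP
  obtain ⟨x', y', hx', hy', hxy', rfl, hcover'⟩ := hQ
  replace hxy' : Interlaced β σ x' y' := fun a b =>
    ⟨(hxy' a b).1, (hxy' a b).2.trans (precedes_congr hsign).symm⟩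
  have hrange : Set.range (Sum.elim x y) = Set.range (Sum.elim x' y') := by
    have := congrArg ((↑) : Finset ℕ → Set ℕ) (hcover.trans hcover'.symm)
    simpa [Set.Sum.elim_range] using this
  have helim := eq_of_range_eq_of_lt_iff_lt (hxy.injective_elim hx hy) hrange
    (hxy.elim_lt_elim_iff hxy' hx hy hx' hy')
  obtain rfl : x = x' := funext fun a => congrFun helim (.inl a)
  obtain rfl : y = y' := funext fun a => congrFun helim (.inr a)
  rfl

lemma HasShape.formsPattern (hP : HasShape r P β σ) (hx : StrictMono x) (hy : StrictMono y)
    (hxy : Interlaced β σ x y) : FormsPattern r (univ.image x) (univ.image y) P := by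
  obtain ⟨x', y', hx', hy', hxy', rfl, hcover⟩ := hP
  obtain ⟨φ, hφ, hφxy⟩ := exists_strictMonoOn_comp_eq (hxy.injective_elim hx hy)
    fun s t => (hxy.elim_lt_elim_iff hxy' hx hy hx' hy' s t).1
  have himx : (univ.image x).image φ = univ.image x' := by
    rw [image_image, show φ ∘ x = x' from funext fun a => congrFun hφxy (.inl a)]
  have himy : (univ.image y).image φ = univ.image y' := by
    rw [image_image, show φ ∘ y = y' from funext fun a => congrFun hφxy (.inr a)]
  refine ⟨φ, ?_, by rw [image_union, himx, himy, hcover], by rw [himx, himy]⟩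
  simpa [Set.Sum.elim_range] using hφ

lemma HasShape.interlaced (hP : HasShape r P β σ) (hx : StrictMono x) (hy : StrictMono y)
    (h : FormsPattern r (univ.image x) (univ.image y) P) :
    Interlaced β σ x y ∨ Interlaced β σ y x := by
  obtain ⟨x', y', hx', hy', hxy', rfl, -⟩ := hP
  obtain ⟨φ, hφ, -, hpair⟩ := h
  have hφx : StrictMono (φ ∘ x) := fun a b hab => hφ (by simp) (by simp) (hx hab)
  have hφy : StrictMono (φ ∘ y) := fun a b hab => hφ (by simp) (by simp) (hy hab)
  rw [image_image, image_image, ← coe_inj, coe_pair, coe_pair, Set.pair_eq_pair_iff] at hpair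
  rcases hpair with ⟨hxx, hyy⟩ | ⟨hxy, hyx⟩
  · rw [image_univ_inj_of_strictMono hφx hx'] at hxx
    rw [image_univ_inj_of_strictMono hφy hy'] at hyy
    rw [← hxx, ← hyy] at hxy'
    exact .inl (hxy'.of_comp hφ)
  · rw [image_univ_inj_of_strictMono hφx hy'] at hxy
    rw [image_univ_inj_of_strictMono hφy hx'] at hyx
    rw [← hxy, ← hyx] at hxy'
    exact .inr (hxy'.of_comp (by rwa [union_comm]))

end Shape

section Composition

/-- The word made of the blocks `AᵗBᵗ` (for an entry `(t, true)`) and `BᵗAᵗ` (for an entry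
`(t, false)`), where `A = true` and `B = false`. -/
def blockWord (l : List (ℕ × Bool)) : List Bool :=
  l.flatMap fun p => List.replicate p.1 p.2 ++ List.replicate p.1 !p.2

/-- The index of the block holding the `a`-th copy of each letter (counted from `0`) in a word whose
blocks have half-lengths `lam`. -/
def blockIndex : List ℕ → ℕ → ℕ
  | [], _ => 0
  | t :: lam, a => if a < t then 0 else blockIndex lam (a - t) + 1

/-- The position (counted from `0`) of the `a`-th copy of the letter `c` in `blockWord l`. -/
def letterPos (c : Bool) : List (ℕ × Bool) → ℕ → ℕ
  | [], a => a
  | (t, b) :: l, a =>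
    if a < t then if b = c then a else t + a else 2 * t + letterPos c l (a - t)

lemma blockWord_cons (p : ℕ × Bool) (l : List (ℕ × Bool)) :
    blockWord (p :: l) = List.replicate p.1 p.2 ++ List.replicate p.1 (!p.2) ++ blockWord l :=
  rfl

lemma length_blockWord (l : List (ℕ × Bool)) : (blockWord l).length = 2 * (l.map Prod.fst).sum := by
  induction l with
  | nil => rfl
  | cons p l ih =>
    simp only [blockWord_cons, List.length_append, List.length_replicate, ih, List.map_cons,
      List.sum_cons]
    ring

lemma blockIndex_monotone (lam : List ℕ) : Monotone (blockIndex lam) := by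
  induction lam with
  | nil => exact monotone_const
  | cons t lam ih =>
    intro a b hab
    simp only [blockIndex]
    split_ifs with ha hb
    · exact le_rfl
    · exact Nat.zero_le _
    · omega
    · exact Nat.succ_le_succ (ih (by omega))

lemma letterPos_strictMono (c : Bool) (l : List (ℕ × Bool)) : StrictMono (letterPos c l) := by
  induction l with
  | nil => exact strictMono_id
  | cons p l ih =>
    intro a b hab
    have := fun h : p.1 ≤ a => ih (show a - p.1 < b - p.1 by omega)
    simp only [letterPos]
    split_ifs <;> grind

lemma getElem?_letterPos (c : Bool) (l : List (ℕ × Bool)) {a : ℕ}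
    (ha : a < (l.map Prod.fst).sum) : (blockWord l)[letterPos c l a]? = some c := by
  induction l generalizing a with
  | nil => simp at ha
  | cons p l ih =>
    simp only [List.map_cons, List.sum_cons] at ha
    have := fun h : p.1 ≤ a => ih (show a - p.1 < _ by omega)
    simp only [letterPos, blockWord_cons]
    split_ifs <;> grind

lemma letterPos_lt_letterPos_iff (l : List (ℕ × Bool)) {a b : ℕ} (ha : a < (l.map Prod.fst).sum)
    (hb : b < (l.map Prod.fst).sum) :
    letterPos true l a < letterPos false l b ↔
      blockIndex (l.map Prod.fst) a < blockIndex (l.map Prod.fst) b ∨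
        blockIndex (l.map Prod.fst) a = blockIndex (l.map Prod.fst) b ∧
          (l.map Prod.snd).getD (blockIndex (l.map Prod.fst) a) true = true := by
  induction l generalizing a b with
  | nil => simp at ha
  | cons p l ih =>
    simp only [List.map_cons, List.sum_cons] at ha hb
    have := fun (h : p.1 ≤ a) (h' : p.1 ≤ b) =>
      ih (show a - p.1 < _ by omega) (show b - p.1 < _ by omega)
    simp only [letterPos, blockIndex, List.map_cons]
    split_ifs <;> grind

lemma exists_mem_one_of_isOrderedMatching_two {r : ℕ} {P : Finset (Finset ℕ)} (hr : r ≠ 0)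
    (hP : IsOrderedMatching r 2 P) :
    ∃ A B : Finset ℕ, P = {A, B} ∧ 1 ∈ A ∧ A.card = r ∧ B.card = r ∧ Disjoint A B ∧
      A ∪ B = Icc 1 (2 * r) := by
  obtain ⟨hcard, hedge, hdisj, hcover⟩ := hP
  obtain ⟨A, B, hAB, rfl⟩ := card_eq_two.1 hcard
  simp only [biUnion_insert, singleton_biUnion, id] at hcover
  rw [mul_comm] at hcover
  have hA := hedge A (by simp)
  have hB := hedge B (by simp)
  have hd := hdisj A (by simp) B (by simp) hAB
  have h1 : 1 ∈ A ∪ B := by rw [hcover, mem_Icc]; omega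
  rcases mem_union.1 h1 with h1 | h1
  · exact ⟨A, B, rfl, h1, hA, hB, hd, hcover⟩
  · exact ⟨B, A, pair_comm A B, h1, hB, hA, hd.symm, by rw [union_comm, hcover]⟩

lemma getElem?_patternWord {r j : ℕ} {A B : Finset ℕ} (hA : 1 ∈ A) (hAB : Disjoint A B) (c : Bool)
    (hj : (patternWord r {A, B})[j]? = some c) : j < 2 * r ∧ (c = true ↔ j + 1 ∈ A) := by
  have hB : 1 ∉ B := disjoint_left.1 hAB hA
  simp only [patternWord, List.getElem?_map, Option.map_eq_some_iff, List.getElem?_eq_some_iff,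
    List.length_range, List.getElem_range] at hj
  obtain ⟨_, ⟨hjr, rfl⟩, rfl⟩ := hj
  simp [hjr, hA, hB]

lemma exists_blockWord_eq {r : ℕ} {P : Finset (Finset ℕ)} {lam : List ℕ}
    (h : HasComposition r P lam) :
    ∃ l : List (ℕ × Bool), l.map Prod.fst = lam ∧ patternWord r P = blockWord l := by
  obtain ⟨-, bs, hbs, hw⟩ := h
  refine ⟨lam.zip bs, List.map_fst_zip hbs.ge, hw.trans ?_⟩
  rw [blockWord, List.flatMap_def, ← List.map_uncurry_zip_eq_zipWith]
  rfl

lemma image_letterPos_eq {r : ℕ} {S : Finset ℕ} {l : List (ℕ × Bool)} {c : Bool}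
    (hsum : (l.map Prod.fst).sum = r) (hS : #S = r)
    (hmem : ∀ j, (blockWord l)[j]? = some c → j + 1 ∈ S) :
    univ.image (fun a : Fin r => letterPos c l a + 1) = S := by
  refine eq_of_subset_of_card_le (image_subset_iff.2 fun a _ => hmem _ ?_) ?_
  · exact getElem?_letterPos c l (a.2.trans_eq hsum.symm)
  · rw [card_image_of_injective, card_fin, hS]
    exact Nat.succ_injective.comp ((letterPos_strictMono c l).injective.comp Fin.val_injective)

lemma exists_hasShape_of_hasComposition {r : ℕ} [NeZero r] {P : Finset (Finset ℕ)} {lam : List ℕ}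
    (hP : IsOrderedMatching r 2 P) (hlam : HasComposition r P lam) :
    ∃ σ : ℕ → Bool, HasShape r P (fun a => blockIndex lam a) σ ∧ σ (blockIndex lam 0) = true := by
  obtain ⟨A, B, rfl, h1A, hA, hB, hAB, hcover⟩ :=
    exists_mem_one_of_isOrderedMatching_two (NeZero.ne r) hP
  obtain ⟨l, rfl, hw⟩ := exists_blockWord_eq hlam
  have hsum : (l.map Prod.fst).sum = r := by
    have := congrArg List.length hw
    rw [length_blockWord, patternWord, List.length_map, List.length_range] at this
    omega
  let pos (c : Bool) (a : Fin r) : ℕ := letterPos c l a + 1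
  have hpos (c : Bool) : StrictMono (pos c) := fun a b hab =>
    Nat.succ_lt_succ (letterPos_strictMono c l hab)
  have himA : univ.image (pos true) = A := image_letterPos_eq hsum hA fun j hj =>
    (getElem?_patternWord h1A hAB true (hw ▸ hj)).2.1 rfl
  have himB : univ.image (pos false) = B := image_letterPos_eq hsum hB fun j hj => by
    obtain ⟨hjr, hjA⟩ := getElem?_patternWord h1A hAB false (hw ▸ hj)
    have hj : j + 1 ∈ A ∪ B := hcover ▸ mem_Icc.2 ⟨Nat.le_add_left _ _, hjr⟩
    exact (mem_union.1 hj).resolve_left (by simpa using hjA)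
  have hinterlaced : Interlaced (fun a : Fin r => blockIndex (l.map Prod.fst) a)
      (fun i => (l.map Prod.snd).getD i true) (pos true) (pos false) := by
    refine fun a b => ⟨?_, Nat.succ_lt_succ_iff.trans
      (letterPos_lt_letterPos_iff l (a.2.trans_eq hsum.symm) (b.2.trans_eq hsum.symm))⟩
    rw [← himA, ← himB] at hAB
    exact disjoint_iff_ne.1 hAB _ (mem_image_of_mem _ (mem_univ a)) _
      (mem_image_of_mem _ (mem_univ b))
  refine ⟨fun i => (l.map Prod.snd).getD i true, ⟨pos true, pos false, hpos true, hpos false,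
    hinterlaced, by rw [himA, himB], by rw [himA, himB, hcover]⟩, ?_⟩
  have h0 : pos true 0 = 1 := by
    obtain ⟨a, -, ha⟩ := mem_image.1 (himA.symm ▸ h1A)
    exact le_antisymm (((hpos true).monotone (Fin.zero_le a)).trans_eq ha) (by simp [pos])
  refine precedes_self.1 ((hinterlaced 0 0).2.1 ?_)
  have : pos true 0 ≠ pos false 0 := (hinterlaced 0 0).1
  have : 1 ≤ pos false 0 := Nat.le_add_left _ _
  omega

end Composition

section Matchings

variable {α : Type*} [DecidableEq α] {r n : ℕ} {U W : Finset α} {M N K : Finset (Finset α)}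

/-- A partition `M` of the finite set `U` into sets of size `r`. -/
def IsMatchingOn (r : ℕ) (U : Finset α) (M : Finset (Finset α)) : Prop :=
  (∀ e ∈ M, e.card = r) ∧ (∀ e ∈ M, ∀ f ∈ M, e ≠ f → Disjoint e f) ∧ M.biUnion id = U

/-- The partitions of `U` into sets of size `r`. -/
noncomputable def matchingsOn (r : ℕ) (U : Finset α) : Finset (Finset (Finset α)) :=
  {M ∈ U.powerset.powerset | IsMatchingOn r U M}

/-- The sets of size `r` in `U` that contain `v`. -/
def edgesAt (r : ℕ) (U : Finset α) (v : α) : Finset (Finset α) :=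
  {e ∈ U.powersetCard r | v ∈ e}

lemma mem_edgesAt {e : Finset α} {v : α} : e ∈ edgesAt r U v ↔ (e ⊆ U ∧ e.card = r) ∧ v ∈ e := by
  rw [edgesAt, mem_filter, mem_powersetCard]

lemma card_edgesAt {v : α} (hv : v ∈ U) (hr : r ≠ 0) :
    (edgesAt r U v).card = (U.card - 1).choose (r - 1) := by
  simpa [edgesAt] using card_filter_powersetCard_subset {v} U r (singleton_subset_iff.2 hv)
    (by rw [card_singleton]; omega)

lemma IsMatchingOn.subset (hM : IsMatchingOn r U M) {e : Finset α} (he : e ∈ M) : e ⊆ U :=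
  hM.2.2 ▸ subset_biUnion_of_mem id he

lemma mem_matchingsOn : M ∈ matchingsOn r U ↔ IsMatchingOn r U M := by
  simp only [matchingsOn, mem_filter, mem_powerset, and_iff_right_iff_imp]
  exact fun hM e he => mem_powerset.2 (hM.subset he)

lemma isMatchingOn_singleton {e : Finset α} : IsMatchingOn e.card e {e} := by
  simp +contextual [IsMatchingOn]

lemma IsMatchingOn.card_mul (hM : IsMatchingOn r U M) : M.card * r = U.card := by
  rw [← hM.2.2, card_biUnion (t := id) hM.2.1]
  exact (sum_const_nat hM.1).symm

lemma IsMatchingOn.disjoint (hr : r ≠ 0) (hM : IsMatchingOn r U M) (hN : IsMatchingOn r W N)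
    (hUW : Disjoint U W) : Disjoint M N := by
  refine disjoint_left.2 fun e he he' => hr ?_
  rw [← hM.1 e he, card_eq_zero, ← disjoint_self_iff_empty]
  exact hUW.mono (hM.subset he) (hN.subset he')

lemma IsMatchingOn.union (hM : IsMatchingOn r U M) (hN : IsMatchingOn r W N)
    (hUW : Disjoint U W) : IsMatchingOn r (U ∪ W) (M ∪ N) := by
  refine ⟨?_, ?_, by rw [union_biUnion, hM.2.2, hN.2.2]⟩
  · simp only [mem_union]
    rintro e (he | he)
    exacts [hM.1 e he, hN.1 e he]
  · simp only [mem_union]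
    rintro e (he | he) f (hf | hf) hef
    · exact hM.2.1 e he f hf hef
    · exact hUW.mono (hM.subset he) (hN.subset hf)
    · exact hUW.symm.mono (hN.subset he) (hM.subset hf)
    · exact hN.2.1 e he f hf hef

lemma IsMatchingOn.sdiff (hM : IsMatchingOn r U M) (hKM : K ⊆ M) :
    IsMatchingOn r (U \ K.biUnion id) (M \ K) := by
  refine ⟨fun e he => hM.1 e (mem_sdiff.1 he).1,
    fun e he f hf => hM.2.1 e (mem_sdiff.1 he).1 f (mem_sdiff.1 hf).1, ?_⟩
  rw [← hM.2.2]
  conv_rhs => rw [← sdiff_union_of_subset hKM, union_biUnion]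
  refine (union_sdiff_cancel_right ?_).symm
  refine (disjoint_biUnion_left _ _ _).2 fun e he => (disjoint_biUnion_right _ _ _).2 fun f hf => ?_
  exact hM.2.1 e (mem_sdiff.1 he).1 f (hKM hf) fun hef => (mem_sdiff.1 he).2 (hef ▸ hf)

lemma card_filter_superset_and_matchingsOn (hr : r ≠ 0) (hK : IsMatchingOn r W K) (hWU : W ⊆ U)
    (p : Finset (Finset α) → Prop) [DecidablePred p] :
    #{M ∈ matchingsOn r U | K ⊆ M ∧ p M} = #{N ∈ matchingsOn r (U \ W) | p (K ∪ N)} := by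
  refine card_nbij' (· \ K) (K ∪ ·) ?_ ?_ ?_ ?_
  · simp only [coe_filter, Set.MapsTo, Set.mem_ofPred_eq, mem_matchingsOn]
    rintro M ⟨hM, hKM, hp⟩
    exact ⟨hK.2.2 ▸ hM.sdiff hKM, by rwa [union_sdiff_of_subset hKM]⟩
  · simp only [coe_filter, Set.MapsTo, Set.mem_ofPred_eq, mem_matchingsOn]
    rintro N ⟨hN, hp⟩
    exact ⟨union_sdiff_of_subset hWU ▸ hK.union hN disjoint_sdiff, subset_union_left, hp⟩
  · simp only [coe_filter, Set.LeftInvOn, Set.mem_ofPred_eq]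
    exact fun M hM => union_sdiff_of_subset hM.2.1
  · simp only [coe_filter, Set.RightInvOn, Set.LeftInvOn, Set.mem_ofPred_eq, mem_matchingsOn]
    exact fun N hN => union_sdiff_cancel_left (hK.disjoint hr hN.1 disjoint_sdiff)

lemma card_filter_superset_matchingsOn (hr : r ≠ 0) (hK : IsMatchingOn r W K) (hWU : W ⊆ U) :
    #{M ∈ matchingsOn r U | K ⊆ M} = #(matchingsOn r (U \ W)) := by
  simpa using card_filter_superset_and_matchingsOn hr hK hWU fun _ => True

lemma card_filter_matchingsOn_eq_sum (hr : r ≠ 0) {v : α} (hv : v ∈ U)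
    (p : Finset (Finset α) → Prop) [DecidablePred p] :
    #{M ∈ matchingsOn r U | p M} =
      ∑ e ∈ edgesAt r U v, #{N ∈ matchingsOn r (U \ e) | p (insert e N)} := by
  have hcover : {M ∈ matchingsOn r U | p M} =
      (edgesAt r U v).biUnion fun e => {M ∈ matchingsOn r U | {e} ⊆ M ∧ p M} := by
    ext M
    simp only [mem_filter, mem_matchingsOn, mem_biUnion, mem_edgesAt, singleton_subset_iff]
    refine ⟨fun ⟨hM, hp⟩ => ?_, fun ⟨_, _, hM, _, hp⟩ => ⟨hM, hp⟩⟩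
    obtain ⟨e, he, hve⟩ := mem_biUnion.1 (hM.2.2.symm ▸ hv)
    exact ⟨e, ⟨⟨hM.subset he, hM.1 e he⟩, hve⟩, hM, he, hp⟩
  rw [hcover, card_biUnion]
  · refine sum_congr rfl fun e he => ?_
    obtain ⟨⟨heU, rfl⟩, -⟩ := mem_edgesAt.1 he
    rw [card_filter_superset_and_matchingsOn hr isMatchingOn_singleton heU]
    rfl
  · refine fun e he f hf hef => disjoint_left.2 fun M hM hM' => ?_
    simp only [mem_filter, mem_matchingsOn, singleton_subset_iff] at hM hM'
    exact disjoint_left.1 (hM.1.2.1 e hM.2.1 f hM'.2.1 hef) (mem_edgesAt.1 he).2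
      (mem_edgesAt.1 hf).2

lemma card_matchingsOn (hr : r ≠ 0) (hU : U.card = r * n) :
    (matchingsOn r U).card = n.uniformBell r := by
  induction n generalizing U with
  | zero =>
    obtain rfl : U = ∅ := by simpa using hU
    have : matchingsOn r (∅ : Finset α) = {∅} := by
      ext M
      simp only [mem_matchingsOn, mem_singleton]
      refine ⟨fun hM => ?_, by rintro rfl; simp [IsMatchingOn]⟩
      simpa [hr] using hM.card_mul
    rw [this, card_singleton, Nat.uniformBell_zero_left]
  | succ n ih =>
    obtain ⟨v, hv⟩ : U.Nonempty := card_ne_zero.1 (by rw [hU]; positivity)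
    have hsum := card_filter_matchingsOn_eq_sum hr hv fun _ => True
    simp only [filter_true] at hsum
    have hedge : ∀ e ∈ edgesAt r U v, #(matchingsOn r (U \ e)) = n.uniformBell r := by
      intro e he
      obtain ⟨⟨heU, her⟩, -⟩ := mem_edgesAt.1 he
      exact ih (by rw [card_sdiff_of_subset heU, hU, her, mul_add_one, Nat.add_sub_cancel])
    rw [hsum, sum_const_nat hedge, card_edgesAt hv hr, hU, Nat.uniformBell_succ_left, mul_add_one,
      mul_comm n r]

lemma IsClique.isMatchingOn {Ps : Set (Finset (Finset ℕ))} {K : Finset (Finset ℕ)}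
    (hK : IsClique r Ps K) :
    IsMatchingOn r (K.biUnion id) K :=
  ⟨hK.1, hK.2.1, rfl⟩

lemma matchingFamilies_eq_matchingsOn (hr : r ≠ 0) :
    matchingFamilies r n = matchingsOn r (Icc 1 (r * n)) := by
  refine filter_congr fun M _ => ⟨And.right, fun hM => ⟨?_, hM⟩⟩
  have := hM.card_mul
  rw [Nat.card_Icc, Nat.add_sub_cancel, mul_comm] at this
  exact Nat.eq_of_mul_eq_mul_left (Nat.pos_of_ne_zero hr) this

lemma card_matchingFamilies (hr : r ≠ 0) : (matchingFamilies r n).card = n.uniformBell r := by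
  rw [matchingFamilies_eq_matchingsOn hr, card_matchingsOn hr]
  rw [Nat.card_Icc, Nat.add_sub_cancel]

lemma card_matchingFamilies_pos (hr : r ≠ 0) : 0 < (matchingFamilies r n).card := by
  have := (n * r).factorial_pos
  rw [← Nat.uniformBell_mul_eq n hr] at this
  rw [card_matchingFamilies hr]
  exact Nat.pos_of_mul_pos_right (Nat.pos_of_mul_pos_right this)

end Matchings

section CliqueCount

variable {r : ℕ} [NeZero r] {β : Fin r → ℕ} {σ τ : ℕ → Bool} {P Q : Finset (Finset ℕ)} {k : ℕ}
  {K K' : Finset (Finset ℕ)} {x x' : Fin k → Fin r → ℕ} {d : Fin r}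

/-- The rows of `x` list the edges of `K` by increasing first vertex, and any two of them are in one
of the relative positions `(β, σ)` and `(β, τ)`. -/
structure IsCliqueEnum (β : Fin r → ℕ) (σ τ : ℕ → Bool) (K : Finset (Finset ℕ))
    (x : Fin k → Fin r → ℕ) : Prop where
  strictMono : ∀ i, StrictMono (x i)
  strictMono_zero : StrictMono fun i => x i 0
  interlaced : ∀ i j, i < j → Interlaced β σ (x i) (x j) ∨ Interlaced β τ (x i) (x j)
  image_eq : univ.image (fun i => univ.image (x i)) = K

lemma IsClique.exists_sorted_enum {Ps : Set (Finset (Finset ℕ))} (hK : IsClique r Ps K)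
    (hk : K.card = k) :
    ∃ x : Fin k → Fin r → ℕ, (∀ i, StrictMono (x i)) ∧ (StrictMono fun i => x i 0) ∧
      (∀ i j, i ≠ j → ∃ S ∈ Ps, FormsPattern r (univ.image (x i)) (univ.image (x j)) S) ∧
      univ.image (fun i => univ.image (x i)) = K := by
  let edge (i : Fin k) : Finset ℕ := (K.equivFinOfCardEq hk).symm i
  have hedge (i) : edge i ∈ K := Subtype.prop _
  have hedge_inj : edge.Injective := Subtype.val_injective.comp (Equiv.injective _)
  let y (i : Fin k) : Fin r → ℕ := (edge i).orderEmbOfFin (hK.1 _ (hedge i))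
  have hy (i) : univ.image (y i) = edge i := image_orderEmbOfFin_univ _ _
  have hy_inj : (fun i => y i 0).Injective := by
    intro i j (hij : y i 0 = y j 0)
    by_contra hne
    have hmem (i) : y i 0 ∈ edge i := orderEmbOfFin_mem _ _ _
    exact disjoint_left.1 (hK.2.1 _ (hedge i) _ (hedge j) (hedge_inj.ne hne)) (hmem i)
      (hij ▸ hmem j)
  let π := Tuple.sort fun i => y i 0
  refine ⟨y ∘ π, fun i => (orderEmbOfFin _ _).strictMono,
    (Tuple.monotone_sort _).strictMono_of_injective (hy_inj.comp π.injective), ?_, ?_⟩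
  · intro i j hij
    simp only [Function.comp_apply, hy]
    exact hK.2.2 _ (hedge _) _ (hedge _) (hedge_inj.ne (π.injective.ne hij))
  · refine eq_of_subset_of_card_le ?_ ?_
    · simp [subset_iff, hy, hedge]
    · simp only [Function.comp_apply, hy]
      rw [hk, card_image_of_injective _ (f := fun i => edge (π i))
        (hedge_inj.comp π.injective), card_fin]

lemma IsClique.exists_isCliqueEnum (hP : HasShape r P β σ) (hQ : HasShape r Q β τ)
    (hσ : σ (β 0) = true) (hτ : τ (β 0) = true) (hK : IsClique r {P, Q} K) (hk : K.card = k) :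
    ∃ x : Fin k → Fin r → ℕ, IsCliqueEnum β σ τ K x := by
  obtain ⟨x, hx, hx0, hform, himage⟩ := hK.exists_sorted_enum hk
  refine ⟨x, hx, hx0, fun i j hij => ?_, himage⟩
  have forward {ρ : ℕ → Bool} (hρ : ρ (β 0) = true)
      (h : Interlaced β ρ (x i) (x j) ∨ Interlaced β ρ (x j) (x i)) :
      Interlaced β ρ (x i) (x j) :=
    h.resolve_right fun h => lt_asymm (hx0 hij) ((h 0 0).2.2 (precedes_self.2 hρ))
  obtain ⟨S, rfl | rfl, hS⟩ := hform i j hij.ne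
  · exact .inl (forward hσ (hP.interlaced (hx i) (hx j) hS))
  · exact .inr (forward hτ (hQ.interlaced (hx i) (hx j) hS))

namespace IsCliqueEnum

lemma range_uncurry (h : IsCliqueEnum β σ τ K x) :
    Set.range (Function.uncurry x) = ↑(K.biUnion id) := by
  ext v
  simp [← h.image_eq, Function.uncurry]

lemma injective_uncurry (h : IsCliqueEnum β σ τ K x) : (Function.uncurry x).Injective := by
  have hne {i j} (hij : i < j) (a b) : x i a ≠ x j b :=
    (h.interlaced i j hij).elim (fun h => (h a b).1) (fun h => (h a b).1)
  rintro ⟨i, a⟩ ⟨j, b⟩ hab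
  rcases lt_trichotomy i j with hij | rfl | hji
  · exact absurd hab (hne hij a b)
  · exact Prod.ext rfl ((h.strictMono i).injective hab)
  · exact absurd hab.symm (hne hji b a)

lemma uncurry_lt_iff (h : IsCliqueEnum β σ τ K x) (h' : IsCliqueEnum β σ τ K' x')
    (hd : σ (β d) ≠ τ (β d)) (hord : ∀ i j, x i d < x j d ↔ x' i d < x' j d)
    (s t : Fin k × Fin r) :
    Function.uncurry x s < Function.uncurry x t ↔
      Function.uncurry x' s < Function.uncurry x' t := by
  have key {i j} (hij : i < j) (s t : Fin r ⊕ Fin r) :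
      Sum.elim (x i) (x j) s < Sum.elim (x i) (x j) t ↔
        Sum.elim (x' i) (x' j) s < Sum.elim (x' i) (x' j) t := by
    obtain ⟨ρ, hρ, hρ'⟩ := exists_common_interlaced hd (h.interlaced i j hij)
      (h'.interlaced i j hij) (hord i j)
    exact hρ.elim_lt_elim_iff hρ' (h.strictMono i) (h.strictMono j) (h'.strictMono i)
      (h'.strictMono j) s t
  obtain ⟨i, a⟩ := s
  obtain ⟨j, b⟩ := t
  rcases lt_trichotomy i j with hij | rfl | hji
  · exact key hij (.inl a) (.inr b)
  · exact (h.strictMono i).lt_iff_lt.trans (h'.strictMono i).lt_iff_lt.symm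
  · exact key hji (.inr a) (.inl b)

lemma eq_of_sort_eq (h : IsCliqueEnum β σ τ K x) (h' : IsCliqueEnum β σ τ K' x')
    (hd : σ (β d) ≠ τ (β d)) (hcover : K.biUnion id = K'.biUnion id)
    (hsort : Tuple.sort (fun i => x i d) = Tuple.sort (fun i => x' i d)) : K = K' := by
  have hinj {K : Finset (Finset ℕ)} {x : Fin k → Fin r → ℕ} (h : IsCliqueEnum β σ τ K x) :
      (fun i => x i d).Injective := fun i j hij =>
    congrArg Prod.fst (h.injective_uncurry (a₁ := (i, d)) (a₂ := (j, d)) hij)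
  have huncurry := eq_of_range_eq_of_lt_iff_lt h.injective_uncurry
    (by rw [h.range_uncurry, h'.range_uncurry, hcover])
    (h.uncurry_lt_iff h' hd (lt_iff_lt_of_sort_eq (hinj h) (hinj h') hsort))
  rw [← h.image_eq, ← h'.image_eq, Function.uncurry_injective huncurry]

end IsCliqueEnum

lemma card_cliques_le (hP : HasShape r P β σ) (hQ : HasShape r Q β τ) (hσ : σ (β 0) = true)
    (hτ : τ (β 0) = true) (hd : σ (β d) ≠ τ (β d)) (V : Finset ℕ) (k : ℕ) :
    #{K ∈ V.powerset.powerset | IsClique r {P, Q} K ∧ K.card = k} ≤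
      V.card.choose (r * k) * k.factorial := by
  set cliques : Finset (Finset (Finset ℕ)) :=
    {K ∈ V.powerset.powerset | IsClique r {P, Q} K ∧ K.card = k}
  have hcliques {K} (hK : K ∈ cliques) : K ⊆ V.powerset ∧ IsClique r {P, Q} K ∧ K.card = k := by
    simpa [cliques] using hK
  have hex (K) (hK : K ∈ cliques) : ∃ x : Fin k → Fin r → ℕ, IsCliqueEnum β σ τ K x :=
    (hcliques hK).2.1.exists_isCliqueEnum hP hQ hσ hτ (hcliques hK).2.2
  choose! x hx using hex
  have hcard : (V.powersetCard (r * k) ×ˢ (univ : Finset (Equiv.Perm (Fin k)))).card =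
      V.card.choose (r * k) * k.factorial := by
    rw [card_product, card_powersetCard, card_univ, Fintype.card_perm, Fintype.card_fin]
  rw [← hcard]
  refine card_le_card_of_injOn (fun K => (K.biUnion id, Tuple.sort fun i => x K i d)) ?_ ?_
  · intro K hK
    obtain ⟨hKV, hclique, rfl⟩ := hcliques hK
    simp only [coe_product, Set.mem_prod, mem_coe, mem_powersetCard, mem_univ, and_true]
    exact ⟨biUnion_subset.2 fun e he => mem_powerset.1 (hKV he),
      by rw [← hclique.isMatchingOn.card_mul, mul_comm]⟩
  · intro K hK K' hK' h
    rw [Prod.mk.injEq] at h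
    exact (hx K hK).eq_of_sort_eq (hx K' hK') hd h.1 h.2

end CliqueCount

section FirstMoment

lemma choose_mul_uniformBell_mul_uniformBell {r n k : ℕ} (hr : r ≠ 0) (hkn : k ≤ n) :
    (r * n).choose (r * k) * k.uniformBell r * (n - k).uniformBell r =
      n.choose k * n.uniformBell r := by
  have hpos : 0 < r.factorial ^ n * (k.factorial * (n - k).factorial) := by positivity
  refine Nat.eq_of_mul_eq_mul_right hpos ?_
  calc (r * n).choose (r * k) * k.uniformBell r * (n - k).uniformBell r *
        (r.factorial ^ n * (k.factorial * (n - k).factorial))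
      = (r * n).choose (r * k) * (k.uniformBell r * r.factorial ^ k * k.factorial) *
          ((n - k).uniformBell r * r.factorial ^ (n - k) * (n - k).factorial) := by
        rw [← Nat.add_sub_cancel' hkn, pow_add, Nat.add_sub_cancel' hkn]; ring
    _ = (r * n).factorial := by
        rw [Nat.uniformBell_mul_eq _ hr, Nat.uniformBell_mul_eq _ hr, mul_comm k, mul_comm (n - k),
          Nat.mul_sub, Nat.choose_mul_factorial_mul_factorial (Nat.mul_le_mul_left r hkn)]
    _ = n.choose k * n.uniformBell r * (r.factorial ^ n * (k.factorial * (n - k).factorial)) := by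
        rw [mul_comm r n, ← Nat.uniformBell_mul_eq _ hr,
          ← Nat.choose_mul_factorial_mul_factorial hkn]
        ring

lemma pow_div_pow_le_uniformBell {r : ℕ} (hr : r ≠ 0) (k : ℕ) :
    ((k : ℝ) ^ (r - 1) / (r.factorial * Real.exp r)) ^ k ≤ k.uniformBell r := by
  have hfact : (k.uniformBell r : ℝ) * r.factorial ^ k * k.factorial = (r * k).factorial := by
    rw [mul_comm r]
    exact_mod_cast Nat.uniformBell_mul_eq k hr
  have hexp := Real.pow_div_factorial_le_exp ((r * k : ℕ) : ℝ) (by positivity) (r * k)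
  have hle : (k : ℝ) ^ (r * k) ≤ ((r * k : ℕ) : ℝ) ^ (r * k) := by
    gcongr
    exact Nat.le_mul_of_pos_left k (Nat.pos_of_ne_zero hr)
  have hpow : (k : ℝ) ^ (r * k) = (k : ℝ) ^ k * ((k : ℝ) ^ (r - 1)) ^ k := by
    rw [← mul_pow, ← pow_succ', Nat.sub_add_cancel (Nat.pos_of_ne_zero hr), ← pow_mul]
  rcases k.eq_zero_or_pos with rfl | hk
  · simp [Nat.uniformBell_zero_left]
  have hkk : (0 : ℝ) < (k : ℝ) ^ k := by positivity
  rw [div_le_iff₀ (by positivity), ← hfact, Nat.cast_mul, Real.exp_mul, Real.rpow_natCast] at hexp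
  rw [div_pow, div_le_iff₀ (by positivity), mul_pow]
  refine le_of_mul_le_mul_left ?_ hkk
  calc (k : ℝ) ^ k * ((k : ℝ) ^ (r - 1)) ^ k
      ≤ Real.exp r ^ k * (k.uniformBell r * r.factorial ^ k * k.factorial) := by
        rw [← hpow]; exact hle.trans (by exact_mod_cast hexp)
    _ ≤ Real.exp r ^ k * (k.uniformBell r * r.factorial ^ k * (k : ℝ) ^ k) := by
        gcongr
        exact_mod_cast k.factorial_le_pow
    _ = (k : ℝ) ^ k * (k.uniformBell r * (r.factorial ^ k * Real.exp r ^ k)) := by ring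

variable {r n k : ℕ} [NeZero r] {β : Fin r → ℕ} {σ τ : ℕ → Bool} {P Q : Finset (Finset ℕ)}
  {d : Fin r}

lemma card_filter_exists_isClique_le (hP : HasShape r P β σ) (hQ : HasShape r Q β τ)
    (hσ : σ (β 0) = true) (hτ : τ (β 0) = true) (hd : σ (β d) ≠ τ (β d)) (n k : ℕ) :
    #{M ∈ matchingFamilies r n | ∃ K ⊆ M, IsClique r {P, Q} K ∧ K.card = k} ≤
      (r * n).choose (r * k) * k.factorial * (n - k).uniformBell r := by
  have hr := NeZero.ne r
  have hcard : (Icc 1 (r * n)).card = r * n := by rw [Nat.card_Icc, Nat.add_sub_cancel]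
  let cliques : Finset (Finset (Finset ℕ)) :=
    {K ∈ (Icc 1 (r * n)).powerset.powerset | IsClique r {P, Q} K ∧ K.card = k}
  have hcover : {M ∈ matchingFamilies r n | ∃ K ⊆ M, IsClique r {P, Q} K ∧ K.card = k} ⊆
      cliques.biUnion fun K => {M ∈ matchingsOn r (Icc 1 (r * n)) | K ⊆ M} := by
    intro M hM
    rw [matchingFamilies_eq_matchingsOn hr] at hM
    obtain ⟨hM, K, hKM, hK⟩ := mem_filter.1 hM
    refine mem_biUnion.2 ⟨K, mem_filter.2 ⟨?_, hK⟩, mem_filter.2 ⟨hM, hKM⟩⟩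
    exact mem_powerset.2 fun e he =>
      mem_powerset.2 ((mem_matchingsOn.1 hM).subset (hKM he))
  have hextend : ∀ K ∈ cliques, #{M ∈ matchingsOn r (Icc 1 (r * n)) | K ⊆ M} ≤
      (n - k).uniformBell r := by
    intro K hK
    simp only [cliques, mem_filter, mem_powerset] at hK
    obtain ⟨hKV, hK, rfl⟩ := hK
    have hsub : K.biUnion id ⊆ Icc 1 (r * n) :=
      biUnion_subset.2 fun e he => mem_powerset.1 (hKV he)
    rw [card_filter_superset_matchingsOn hr hK.isMatchingOn hsub, card_matchingsOn hr]
    rw [card_sdiff_of_subset hsub, hcard, ← hK.isMatchingOn.card_mul, Nat.mul_sub, mul_comm r #K]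
  refine (card_le_card hcover).trans ((card_biUnion_le_card_mul _ _ _ hextend).trans ?_)
  gcongr
  simpa only [hcard] using card_cliques_le hP hQ hσ hτ hd (Icc 1 (r * n)) k

lemma card_filter_exists_isClique_mul_le (hP : HasShape r P β σ) (hQ : HasShape r Q β τ)
    (hσ : σ (β 0) = true) (hτ : τ (β 0) = true) (hd : σ (β d) ≠ τ (β d)) (n k : ℕ) :
    #{M ∈ matchingFamilies r n | ∃ K ⊆ M, IsClique r {P, Q} K ∧ K.card = k} * k.uniformBell r ≤
      n ^ k * (matchingFamilies r n).card := by
  have hr := NeZero.ne r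
  rw [card_matchingFamilies hr]
  rcases lt_or_ge n k with hnk | hkn
  · rw [filter_eq_empty_iff.2, card_empty, zero_mul]
    · exact Nat.zero_le _
    rintro M hM ⟨K, hKM, -, rfl⟩
    exact hnk.not_ge ((card_le_card hKM).trans_eq (mem_filter.1 hM).2.1)
  calc _ ≤ (r * n).choose (r * k) * k.factorial * (n - k).uniformBell r * k.uniformBell r := by
        gcongr
        exact card_filter_exists_isClique_le hP hQ hσ hτ hd n k
    _ = k.factorial * n.choose k * n.uniformBell r := by
        rw [mul_assoc (k.factorial), ← choose_mul_uniformBell_mul_uniformBell hr hkn]; ring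
    _ ≤ n ^ k * n.uniformBell r := by
        gcongr
        rw [← Nat.descFactorial_eq_factorial_mul_choose]
        exact Nat.descFactorial_le_pow n k

lemma card_filter_exists_isClique_mul_two_pow_le (hP : HasShape r P β σ) (hQ : HasShape r Q β τ)
    (hσ : σ (β 0) = true) (hτ : τ (β 0) = true) (hd : σ (β d) ≠ τ (β d)) (hn : n ≠ 0)
    (hk : 2 * (r.factorial * Real.exp r) * n ≤ (k : ℝ) ^ (r - 1)) :
    (#{M ∈ matchingFamilies r n | ∃ K ⊆ M, IsClique r {P, Q} K ∧ K.card = k} : ℝ) * 2 ^ k ≤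
      (matchingFamilies r n).card := by
  have hcount : (2 * n : ℝ) ^ k ≤ k.uniformBell r := by
    refine (pow_le_pow_left₀ (by positivity) ?_ k).trans
      (pow_div_pow_le_uniformBell (NeZero.ne r) k)
    rw [le_div_iff₀ (by positivity)]
    linarith
  have hmoment : (#{M ∈ matchingFamilies r n | ∃ K ⊆ M, IsClique r {P, Q} K ∧ K.card = k} : ℝ) *
      k.uniformBell r ≤ n ^ k * (matchingFamilies r n).card := by
    exact_mod_cast card_filter_exists_isClique_mul_le hP hQ hσ hτ hd n k
  refine le_of_mul_le_mul_left ?_ (show (0 : ℝ) < (n : ℝ) ^ k by positivity)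
  refine le_trans ?_ hmoment
  calc _ = (#{M ∈ matchingFamilies r n | ∃ K ⊆ M, IsClique r {P, Q} K ∧ K.card = k} : ℝ) *
        (2 * n) ^ k := by ring
    _ ≤ _ := by gcongr

end FirstMoment

section Cells

variable {r m L : ℕ} {β : Fin r → ℕ} {σ τ ρ : ℕ → Bool} {x y : Fin r → ℕ} {a b : Fin r}
  {l l' : Fin m}

/-- The cells are ordered by block, then by level, then by coordinate; this is the number of cells
before the cell of coordinate `a` and level `l`. -/
def cellRank (β : Fin r → ℕ) (a : Fin r) (l : Fin m) : ℕ :=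
  #{c : Fin r × Fin m | toLex (β c.1, toLex (c.2, c.1)) < toLex (β a, toLex (l, a))}

/-- The cell of coordinate `a` and level `l`: an interval of `L` vertices from which the `a`-th
vertex of an edge may be chosen. -/
def cell (β : Fin r → ℕ) (L : ℕ) (a : Fin r) (l : Fin m) : Finset ℕ :=
  Ico (1 + cellRank β a l * L) (1 + (cellRank β a l + 1) * L)

lemma card_cell : (cell β L a l).card = L := by
  rw [cell, Nat.card_Ico, add_one_mul]
  omega

lemma cellRank_lt : cellRank β a l < r * m := by
  calc cellRank β a l < #(univ : Finset (Fin r × Fin m)) := by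
        refine card_lt_card ((filter_ssubset (s := univ)).2 ⟨(a, l), mem_univ _, lt_irrefl _⟩)
    _ = r * m := by simp

lemma cell_subset {n : ℕ} (hn : m * L ≤ n) : cell β L a l ⊆ Icc 1 (r * n) := by
  intro v hv
  have hrank : (cellRank β a l + 1) * L ≤ r * n := calc
    (cellRank β a l + 1) * L ≤ r * m * L := Nat.mul_le_mul_right L cellRank_lt
    _ ≤ r * n := by rw [mul_assoc]; exact Nat.mul_le_mul_left r hn
  simp only [cell, mem_Ico, mem_Icc] at hv ⊢
  omega

lemma lt_of_mem_cell (h : toLex (β a, toLex (l, a)) < toLex (β b, toLex (l', b))) {u v : ℕ}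
    (hu : u ∈ cell β L a l) (hv : v ∈ cell β L b l') : u < v := by
  have hrank : cellRank β a l < cellRank β b l' := by
    refine card_lt_card ((ssubset_iff_of_subset fun c hc => ?_).2 ⟨(a, l), ?_, ?_⟩)
    · exact mem_filter.2 ⟨mem_univ _, (mem_filter.1 hc).2.trans h⟩
    · exact mem_filter.2 ⟨mem_univ _, h⟩
    · exact fun hmem => lt_irrefl _ (mem_filter.1 hmem).2
  have := Nat.mul_le_mul_right L (Nat.succ_le_of_lt hrank)
  simp only [cell, mem_Ico] at hu hv
  exact hu.2.trans_le (le_trans (Nat.add_le_add_left this 1) hv.1)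

lemma lt_of_mem_cell_of_block_lt (h : β a < β b) {u v : ℕ}
    (hu : u ∈ cell β L a l) (hv : v ∈ cell β L b l') : u < v :=
  lt_of_mem_cell (Prod.Lex.toLex_lt_toLex.2 (.inl h)) hu hv

lemma lt_of_mem_cell_of_level_lt (h : β a = β b) (hl : l < l') {u v : ℕ}
    (hu : u ∈ cell β L a l) (hv : v ∈ cell β L b l') : u < v :=
  lt_of_mem_cell (Prod.Lex.toLex_lt_toLex.2 (.inr ⟨h, Prod.Lex.toLex_lt_toLex.2 (.inl hl)⟩)) hu hv

lemma eq_of_mem_cell {v : ℕ} (h : v ∈ cell β L a l) (h' : v ∈ cell β L b l') :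
    a = b ∧ l = l' := by
  rcases lt_trichotomy (toLex (β a, toLex (l, a))) (toLex (β b, toLex (l', b))) with hlt | heq | hgt
  · exact absurd (lt_of_mem_cell hlt h h') (lt_irrefl v)
  · simp only [toLex_inj, Prod.mk.injEq] at heq
    exact ⟨heq.2.2, heq.2.1⟩
  · exact absurd (lt_of_mem_cell hgt h' h) (lt_irrefl v)

lemma strictMono_of_mem_cell (hβ : Monotone β) {l : ℕ → Fin m}
    (hx : ∀ a, x a ∈ cell β L a (l (β a))) : StrictMono x := by
  intro a b hab
  refine lt_of_mem_cell (Prod.Lex.toLex_lt_toLex.2 ?_) (hx a) (hx b)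
  refine (hβ hab.le).lt_or_eq.imp id fun h => ⟨h, Prod.Lex.toLex_lt_toLex.2 (.inr ⟨?_, hab⟩)⟩
  exact congrArg l h

lemma interlaced_of_mem_cell {l l' : ℕ → Fin m}
    (hlt : ∀ i, ρ i = true → l i < l' i) (hgt : ∀ i, ρ i = false → l' i < l i)
    (hx : ∀ a, x a ∈ cell β L a (l (β a))) (hy : ∀ a, y a ∈ cell β L a (l' (β a))) :
    Interlaced β ρ x y := by
  suffices h : ∀ a b, (Precedes β ρ a b → x a < y b) ∧ (¬ Precedes β ρ a b → y b < x a) by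
    intro a b
    have := h a b
    by_cases hab : Precedes β ρ a b <;> simp only [hab] at this ⊢ <;> grind
  intro a b
  rcases lt_trichotomy (β a) (β b) with h | h | h
  · exact ⟨fun _ => lt_of_mem_cell_of_block_lt h (hx a) (hy b), fun hab => absurd (.inl h) hab⟩
  · have hyb := h ▸ hy b
    cases hρ : ρ (β a) with
    | true => exact ⟨fun _ => lt_of_mem_cell_of_level_lt h (hlt _ hρ) (hx a) hyb,
        fun hab => absurd (.inr ⟨h, hρ⟩) hab⟩
    | false => exact ⟨fun hab => by simp [Precedes, h, h ▸ hρ] at hab,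
        fun _ => lt_of_mem_cell_of_level_lt h.symm (hgt _ hρ) hyb (hx a)⟩
  · refine ⟨fun hab => ?_, fun _ => lt_of_mem_cell_of_block_lt h (hy b) (hx a)⟩
    rcases hab with hab | hab <;> omega

/-- The level `l`, counted from above if the sign `s` of the block is `false`. -/
def orient (s : Bool) (l : Fin m) : Fin m :=
  if s then l else l.rev

lemma orient_injective (s : Bool) : (orient s : Fin m → Fin m).Injective := by
  cases s
  · exact Fin.rev_injective
  · exact fun _ _ h => h

/-- The level from which an edge of type `p` takes its vertices in the `i`-th block. Its first
component governs the blocks where the signs `σ` and `τ` agree, the second one the others, so that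
two edges interlace according to `σ` or `τ` when their types are ordered by both components in the
same or in opposite ways. -/
def level (σ τ : ℕ → Bool) (i : ℕ) (p : Fin m × Fin m) : Fin m :=
  orient (σ i) (if σ i = τ i then p.1 else p.2)

/-- The vertices of the tuple `x` lie in the cells prescribed by the type `p`. -/
def HasType (β : Fin r → ℕ) (σ τ : ℕ → Bool) (L : ℕ) (p : Fin m × Fin m) (x : Fin r → ℕ) : Prop :=
  ∀ a, x a ∈ cell β L a (level σ τ (β a) p)

variable {p q : Fin m × Fin m}

lemma HasType.strictMono (hβ : Monotone β) (hx : HasType β σ τ L p x) : StrictMono x :=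
  strictMono_of_mem_cell hβ (l := fun i => level σ τ i p) hx

lemma HasType.interlaced_or_interlaced (hx : HasType β σ τ L p x) (hy : HasType β σ τ L q y)
    (h₁ : p.1 < q.1) (h₂ : p.2 ≠ q.2) : Interlaced β σ x y ∨ Interlaced β τ x y := by
  rcases h₂.lt_or_gt with h₂ | h₂
  · refine .inl (interlaced_of_mem_cell (l := fun i => level σ τ i p)
      (l' := fun i => level σ τ i q) (fun i hi => ?_) (fun i hi => ?_) hx hy) <;>
    simp only [level, orient, hi, Bool.false_eq_true, ↓reduceIte, Fin.rev_lt_rev] <;>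
    split_ifs <;> assumption
  · refine .inr (interlaced_of_mem_cell (l := fun i => level σ τ i p)
      (l' := fun i => level σ τ i q) (fun i hi => ?_) (fun i hi => ?_) hx hy) <;>
    cases hσ : σ i <;> simp [level, orient, hi, hσ, h₁, h₂]

end Cells

section TypedFamilies

variable {r m L : ℕ} {β : Fin r → ℕ} {σ τ : ℕ → Bool} {P Q : Finset (Finset ℕ)}
  {K : Finset (Finset ℕ)}

/-- The edges in `K` can be given types so that no two of them agree in a component. -/
def IsTypedFamily (β : Fin r → ℕ) (σ τ : ℕ → Bool) (m L : ℕ) (K : Finset (Finset ℕ)) : Prop :=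
  ∃ θ : Finset ℕ → Fin m × Fin m,
    (∀ e ∈ K, ∃ x, HasType β σ τ L (θ e) x ∧ univ.image x = e) ∧
    Set.InjOn (fun e => (θ e).1) K ∧ Set.InjOn (fun e => (θ e).2) K

lemma isTypedFamily_empty (hm : m ≠ 0) : IsTypedFamily β σ τ m L ∅ :=
  have : NeZero m := ⟨hm⟩
  ⟨fun _ => (0, 0), by simp, by simp, by simp⟩

lemma FormsPattern.symm {e f : Finset ℕ} (h : FormsPattern r e f P) : FormsPattern r f e P := by
  obtain ⟨φ, hφ, himage, hpair⟩ := h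
  exact ⟨φ, by rwa [union_comm], by rwa [union_comm], by rwa [pair_comm]⟩

lemma IsTypedFamily.isClique (hβ : Monotone β) (hP : HasShape r P β σ) (hQ : HasShape r Q β τ)
    (hK : IsTypedFamily β σ τ m L K) : IsClique r {P, Q} K := by
  obtain ⟨θ, hθ, hfst, hsnd⟩ := hK
  have hlt : ∀ e ∈ K, ∀ f ∈ K, e ≠ f → (θ e).1 < (θ f).1 →
      Disjoint e f ∧ ∃ R ∈ ({P, Q} : Set (Finset (Finset ℕ))), FormsPattern r e f R := by
    intro e he f hf hef h
    obtain ⟨x, hx, hxe⟩ := hθ e he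
    obtain ⟨y, hy, hyf⟩ := hθ f hf
    rw [← hxe, ← hyf]
    have hx_mono := hx.strictMono hβ
    have hy_mono := hy.strictMono hβ
    rcases hx.interlaced_or_interlaced hy h fun h => hef (hsnd he hf h) with hxy | hxy
    · exact ⟨hxy.disjoint, P, by simp, hP.formsPattern hx_mono hy_mono hxy⟩
    · exact ⟨hxy.disjoint, Q, by simp, hQ.formsPattern hx_mono hy_mono hxy⟩
  have hne : ∀ e ∈ K, ∀ f ∈ K, e ≠ f →
      Disjoint e f ∧ ∃ R ∈ ({P, Q} : Set (Finset (Finset ℕ))), FormsPattern r e f R := by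
    intro e he f hf hef
    rcases lt_or_gt_of_ne fun h => hef (hfst he hf h) with h | h
    · exact hlt e he f hf hef h
    · obtain ⟨hdisj, R, hR, hforms⟩ := hlt f hf e he hef.symm h
      exact ⟨hdisj.symm, R, hR, hforms.symm⟩
  refine ⟨fun e he => ?_, fun e he f hf hef => (hne e he f hf hef).1,
    fun e he f hf hef => (hne e he f hf hef).2⟩
  obtain ⟨x, hx, rfl⟩ := hθ e he
  rw [card_image_of_injective _ (hx.strictMono hβ).injective, card_univ, Fintype.card_fin]

end TypedFamilies

section TypedExtensions

variable {r m L : ℕ} {β : Fin r → ℕ} {σ τ : ℕ → Bool} {K : Finset (Finset ℕ)} {U V : Finset ℕ}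
  {p : Fin m × Fin m} {v : ℕ} {x : Fin r → ℕ}

/-- The levels at which, for every coordinate, at least half of the cell given by the signs `σ`
lies in `U`. -/
def fullLevels (β : Fin r → ℕ) (σ : ℕ → Bool) (m L : ℕ) (U : Finset ℕ) : Finset (Fin m) :=
  {l | ∀ a, L ≤ 2 * #(cell β L a (orient (σ (β a)) l) ∩ U)}

lemma card_compl_fullLevels_mul_le (hV : ∀ a (l : Fin m), cell β L a l ⊆ V) :
    #(fullLevels β σ m L U)ᶜ * L ≤ 2 * #(V \ U) := by
  let row (l : Fin m) : Finset ℕ := univ.biUnion fun a => cell β L a (orient (σ (β a)) l) \ U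
  have hrow : ∀ l ∈ (fullLevels β σ m L U)ᶜ, L ≤ 2 * #(row l) := by
    intro l hl
    simp only [fullLevels, mem_compl, mem_filter, mem_univ, true_and, not_forall, not_le] at hl
    obtain ⟨a, ha⟩ := hl
    have hsplit := card_inter_add_card_sdiff (cell β L a (orient (σ (β a)) l)) U
    have hle : #(cell β L a (orient (σ (β a)) l) \ U) ≤ #(row l) :=
      card_le_card (subset_biUnion_of_mem
        (fun a => cell β L a (orient (σ (β a)) l) \ U) (mem_univ a))
    rw [card_cell] at hsplit
    omega
  have hdisj : ∀ l ∈ (fullLevels β σ m L U)ᶜ, ∀ l' ∈ (fullLevels β σ m L U)ᶜ, l ≠ l' →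
      Disjoint (row l) (row l') := by
    refine fun l _ l' _ hne => disjoint_left.2 fun v hv hv' => hne ?_
    simp only [row, mem_biUnion, mem_univ, true_and, mem_sdiff] at hv hv'
    obtain ⟨a, hva, -⟩ := hv
    obtain ⟨b, hvb, -⟩ := hv'
    obtain ⟨rfl, hl⟩ := eq_of_mem_cell hva hvb
    exact orient_injective _ hl
  calc #(fullLevels β σ m L U)ᶜ * L
      ≤ ∑ l ∈ (fullLevels β σ m L U)ᶜ, 2 * #(row l) := by
        rw [← smul_eq_mul]
        exact card_nsmul_le_sum _ _ _ hrow
    _ = 2 * #((fullLevels β σ m L U)ᶜ.biUnion row) := by rw [← mul_sum, card_biUnion hdisj]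
    _ ≤ 2 * #(V \ U) := by
        refine Nat.mul_le_mul_left 2 (card_le_card (biUnion_subset.2 fun l _ => ?_))
        exact biUnion_subset.2 fun a _ => sdiff_subset_sdiff (hV a _) le_rfl

lemma card_le_two_mul_card_fullLevels_sdiff (hL : L ≠ 0) (hV : ∀ a (l : Fin m), cell β L a l ⊆ V)
    (hU : 8 * #(V \ U) ≤ m * L) {J : Finset (Fin m)} (hJ : 4 * #J ≤ m) :
    m ≤ 2 * #(fullLevels β σ m L U \ J) := by
  have hcompl : 4 * #(fullLevels β σ m L U)ᶜ ≤ m := by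
    refine Nat.le_of_mul_le_mul_right ?_ (Nat.pos_of_ne_zero hL)
    have := card_compl_fullLevels_mul_le (σ := σ) (U := U) hV
    rw [mul_assoc]
    omega
  have hsum := card_add_card_compl (fullLevels β σ m L U)
  have hsdiff := le_card_sdiff J (fullLevels β σ m L U)
  rw [Fintype.card_fin] at hsum
  omega

lemma half_le_card_cell_inter (h₁ : p.1 ∈ fullLevels β σ m L U)
    (h₂ : p.2 ∈ fullLevels β σ m L U) (a : Fin r) :
    L ≤ 2 * #(cell β L a (level σ τ (β a) p) ∩ U) := by
  unfold level
  split_ifs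
  exacts [(mem_filter.1 h₁).2 a, (mem_filter.1 h₂).2 a]

lemma isTypedFamily_insert {θ : Finset ℕ → Fin m × Fin m}
    (hθ : ∀ e ∈ K, ∃ x, HasType β σ τ L (θ e) x ∧ univ.image x = e)
    (hfst : Set.InjOn (fun e => (θ e).1) K) (hsnd : Set.InjOn (fun e => (θ e).2) K)
    (h₁ : p.1 ∉ K.image fun e => (θ e).1) (h₂ : p.2 ∉ K.image fun e => (θ e).2)
    (hx : HasType β σ τ L p x) (hxK : univ.image x ∉ K) :
    IsTypedFamily β σ τ m L (insert (univ.image x) K) := by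
  have hupdate : ∀ e ∈ K, Function.update θ (univ.image x) p e = θ e := fun e he =>
    Function.update_of_ne (ne_of_mem_of_not_mem he hxK) _ _
  have hinj (g : Fin m × Fin m → Fin m) (hg : Set.InjOn (fun e => g (θ e)) K)
      (hp : g p ∉ K.image fun e => g (θ e)) :
      Set.InjOn (fun e => g (Function.update θ (univ.image x) p e)) ↑(insert (univ.image x) K) := by
    have heq : Set.EqOn (fun e => g (θ e)) (fun e => g (Function.update θ (univ.image x) p e)) K :=
      fun e he => congrArg g (hupdate e he).symm
    rw [coe_insert, Set.injOn_insert (mem_coe.not.2 hxK), Function.update_self, ← coe_image]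
    exact ⟨hg.congr heq, by rwa [mem_coe, ← image_congr heq]⟩
  refine ⟨Function.update θ (univ.image x) p, ?_, hinj Prod.fst hfst h₁, hinj Prod.snd hsnd h₂⟩
  rw [forall_mem_insert]
  refine ⟨⟨x, by rwa [Function.update_self], rfl⟩, fun e he => ?_⟩
  rw [hupdate e he]
  exact hθ e he

variable [NeZero r]

/-- The tuples of type `p` with vertices in `U` that start at `v`. -/
noncomputable def typedTuples (β : Fin r → ℕ) (σ τ : ℕ → Bool) (L : ℕ) (U : Finset ℕ) (v : ℕ)
    (p : Fin m × Fin m) : Finset (Fin r → ℕ) :=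
  {x ∈ Fintype.piFinset fun a => cell β L a (level σ τ (β a) p) ∩ U | x 0 = v}

lemma mem_typedTuples :
    x ∈ typedTuples β σ τ L U v p ↔ HasType β σ τ L p x ∧ (∀ a, x a ∈ U) ∧ x 0 = v := by
  simp only [typedTuples, mem_filter, Fintype.mem_piFinset, mem_inter, forall_and, HasType,
    and_assoc]

lemma pow_le_card_typedTuples (hv : v ∈ cell β L 0 (level σ τ (β 0) p) ∩ U)
    (h₁ : p.1 ∈ fullLevels β σ m L U) (h₂ : p.2 ∈ fullLevels β σ m L U) :
    (L / 2 : ℝ) ^ (r - 1) ≤ #(typedTuples β σ τ L U v p) := by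
  have hcard := Fintype.card_filter_piFinset_eq_of_mem
    (fun a => cell β L a (level σ τ (β a) p) ∩ U) 0 hv
  calc (L / 2 : ℝ) ^ (r - 1) = ∏ _a ∈ univ.erase (0 : Fin r), (L / 2 : ℝ) := by
        rw [prod_const, card_erase_of_mem (mem_univ _), card_univ, Fintype.card_fin]
    _ ≤ ∏ a ∈ univ.erase (0 : Fin r), (#(cell β L a (level σ τ (β a) p) ∩ U) : ℝ) := by
        refine prod_le_prod (fun _ _ => by positivity) fun a _ => ?_
        rw [div_le_iff₀' two_pos]
        exact_mod_cast half_le_card_cell_inter h₁ h₂ a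
    _ = #(typedTuples β σ τ L U v p) := by rw [typedTuples, hcard, Nat.cast_prod]

lemma image_mem_edgesAt (hβ : Monotone β) (hx : x ∈ typedTuples β σ τ L U v p) :
    univ.image x ∈ edgesAt r U v := by
  obtain ⟨hxp, hxU, rfl⟩ := mem_typedTuples.1 hx
  refine mem_edgesAt.2 ⟨⟨image_subset_iff.2 fun a _ => hxU a, ?_⟩, mem_image_of_mem x (mem_univ 0)⟩
  rw [card_image_of_injective _ (hxp.strictMono hβ).injective, card_univ, Fintype.card_fin]

-- The coordinate `d`, where the two signs differ, recovers the second component of the type.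
lemma card_mul_pow_le_card_biUnion_typedTuples (hβ : Monotone β) {d : Fin r}
    (hd : σ (β d) ≠ τ (β d)) {j : Fin m} {J : Finset (Fin m)}
    (hv : ∀ j' ∈ J, v ∈ cell β L 0 (level σ τ (β 0) (j, j')) ∩ U)
    (hj : j ∈ fullLevels β σ m L U) (hJ : J ⊆ fullLevels β σ m L U) :
    #J * (L / 2 : ℝ) ^ (r - 1) ≤
      #(J.biUnion fun j' => (typedTuples β σ τ L U v (j, j')).image (univ.image ·)) := by
  have hinj : ∀ j', Set.InjOn (fun x : Fin r → ℕ => univ.image x)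
      (typedTuples β σ τ L U v (j, j')) := by
    intro j' x hx y hy hxy
    have hx := (mem_typedTuples.1 hx).1.strictMono hβ
    have hy := (mem_typedTuples.1 hy).1.strictMono hβ
    exact (image_univ_inj_of_strictMono hx hy).1 hxy
  have hdisj : ∀ j₁ ∈ J, ∀ j₂ ∈ J, j₁ ≠ j₂ →
      Disjoint ((typedTuples β σ τ L U v (j, j₁)).image (univ.image ·))
        ((typedTuples β σ τ L U v (j, j₂)).image (univ.image ·)) := by
    refine fun j₁ _ j₂ _ hne => disjoint_left.2 fun e he he' => hne ?_
    obtain ⟨x, hx, rfl⟩ := mem_image.1 he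
    obtain ⟨y, hy, hyx⟩ := mem_image.1 he'
    have hx := (mem_typedTuples.1 hx).1
    have hy := (mem_typedTuples.1 hy).1
    obtain rfl : y = x :=
      (image_univ_inj_of_strictMono (hy.strictMono hβ) (hx.strictMono hβ)).1 hyx
    have hlevel := (eq_of_mem_cell (hx d) (hy d)).2
    simpa only [level, if_neg hd] using orient_injective _ hlevel
  rw [card_biUnion hdisj, Nat.cast_sum, ← nsmul_eq_mul]
  refine card_nsmul_le_sum _ _ _ fun j' hj' => ?_
  rw [card_image_of_injOn (hinj j')]
  exact pow_le_card_typedTuples (hv j' hj') hj (hJ hj')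

lemma level_block_zero (hσ : σ (β 0) = true) (hτ : τ (β 0) = true) :
    level σ τ (β 0) p = p.1 := by
  simp [level, orient, hσ, hτ]

lemma image_notMem_of_fst_notMem {θ : Finset ℕ → Fin m × Fin m} (hβ : Monotone β)
    (hσ : σ (β 0) = true) (hτ : τ (β 0) = true)
    (hθ : ∀ e ∈ K, ∃ x, HasType β σ τ L (θ e) x ∧ univ.image x = e)
    (h₁ : p.1 ∉ K.image fun e => (θ e).1) (hx : HasType β σ τ L p x) : univ.image x ∉ K := by
  intro hmem
  obtain ⟨y, hy, hyx⟩ := hθ _ hmem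
  rw [image_univ_inj_of_strictMono (hy.strictMono hβ) (hx.strictMono hβ)] at hyx
  have hlevel := (eq_of_mem_cell (hx 0) (hyx ▸ hy 0)).2
  rw [level_block_zero hσ hτ, level_block_zero hσ hτ] at hlevel
  exact h₁ (mem_image.2 ⟨_, hmem, hlevel.symm⟩)

lemma exists_mul_pow_le_card_extensions (hβ : Monotone β) (hσ : σ (β 0) = true)
    (hτ : τ (β 0) = true) {d : Fin r} (hd : σ (β d) ≠ τ (β d)) (hL : L ≠ 0)
    (hV : ∀ a (l : Fin m), cell β L a l ⊆ V) (hU : 8 * #(V \ U) ≤ m * L)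
    (hK : IsTypedFamily β σ τ m L K) (hKm : 4 * #K < m) :
    ∃ v ∈ U, (m / 2 : ℝ) * (L / 2) ^ (r - 1) ≤
      #{e ∈ edgesAt r U v | e ∉ K ∧ IsTypedFamily β σ τ m L (insert e K)} := by
  obtain ⟨θ, hθ, hfst, hsnd⟩ := hK
  have hlarge (g : Finset ℕ → Fin m) : m ≤ 2 * #(fullLevels β σ m L U \ K.image g) :=
    card_le_two_mul_card_fullLevels_sdiff hL hV hU (by grind [card_image_le (s := K) (f := g)])
  obtain ⟨j, hj⟩ : (fullLevels β σ m L U \ K.image fun e => (θ e).1).Nonempty :=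
    card_pos.1 (by have := hlarge fun e => (θ e).1; omega)
  obtain ⟨hj, hjK⟩ := mem_sdiff.1 hj
  obtain ⟨v, hv⟩ : (cell β L 0 j ∩ U).Nonempty := by
    have := half_le_card_cell_inter (τ := τ) (p := (j, j)) hj hj 0
    simp only [level_block_zero hσ hτ] at this
    exact card_pos.1 (by omega)
  refine ⟨v, (mem_inter.1 hv).2, ?_⟩
  have hcount := card_mul_pow_le_card_biUnion_typedTuples hβ hd (v := v) (L := L)
    (J := fullLevels β σ m L U \ K.image fun e => (θ e).2)
    (fun j' _ => by rwa [level_block_zero hσ hτ]) hj sdiff_subset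
  refine (le_trans ?_ hcount).trans (Nat.cast_le.2 (card_le_card (biUnion_subset.2 fun j' hj' =>
    image_subset_iff.2 fun x hx => ?_)))
  · refine mul_le_mul_of_nonneg_right ?_ (by positivity)
    rw [div_le_iff₀' two_pos]
    exact_mod_cast hlarge fun e => (θ e).2
  · have hxp := (mem_typedTuples.1 hx).1
    have hxK := image_notMem_of_fst_notMem hβ hσ hτ hθ hjK hxp
    exact mem_filter.2 ⟨image_mem_edgesAt hβ hx, hxK,
      isTypedFamily_insert hθ hfst hsnd hjK (mem_sdiff.1 hj').2 hxp hxK⟩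

end TypedExtensions

section Exposure

variable {α : Type*} [DecidableEq α] {r n k B t : ℕ} {p : ℝ} {U V : Finset α}
  {K M : Finset (Finset α)} {Cl : Finset (Finset α) → Prop}

/-- Adding members of `M` to `K` can produce a family with the property `Cl` and at least `k`
members. -/
def ExtendsIn (Cl : Finset (Finset α) → Prop) (k : ℕ) (K M : Finset (Finset α)) : Prop :=
  ∃ N ⊆ M, Cl (K ∪ N) ∧ k ≤ #(K ∪ N)

lemma ExtendsIn.mono {M' : Finset (Finset α)} (h : ExtendsIn Cl k K M) (hM : M ⊆ M') :
    ExtendsIn Cl k K M' := by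
  obtain ⟨N, hN, hCl, hk⟩ := h
  exact ⟨N, hN.trans hM, hCl, hk⟩

lemma ExtendsIn.of_insert {e : Finset α} (h : ExtendsIn Cl k (insert e K) M) :
    ExtendsIn Cl k K (insert e M) := by
  obtain ⟨N, hN, hCl, hk⟩ := h
  rw [insert_union, ← union_insert] at hCl hk
  exact ⟨insert e N, insert_subset_insert e hN, hCl, hk⟩

lemma extendsIn_of_le (hK : Cl K) (hk : k ≤ #K) : ExtendsIn Cl k K M :=
  ⟨∅, empty_subset _, by rwa [union_empty], by rwa [union_empty]⟩

lemma sum_le_of_half_on {ι : Type*} {s : Finset ι} {f : ι → ℝ} {q : ℝ} {good : ι → Prop}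
    [DecidablePred good] (hq : 0 ≤ q) (hf : ∀ i ∈ s, f i ≤ if good i then q / 2 else q)
    (hgood : p * #s ≤ #{i ∈ s | good i}) : ∑ i ∈ s, f i ≤ q * (1 - p / 2) * #s := by
  have hsplit : (#{i ∈ s | good i} : ℝ) + #{i ∈ s | ¬ good i} = #s := by
    exact_mod_cast card_filter_add_card_filter_not good
  calc ∑ i ∈ s, f i ≤ ∑ i ∈ s, if good i then q / 2 else q := sum_le_sum hf
    _ = q * (#s - #{i ∈ s | good i} / 2) := by
        rw [sum_ite, sum_const, sum_const, nsmul_eq_mul, nsmul_eq_mul]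
        linear_combination q * hsplit
    _ ≤ q * (#s - p * #s / 2) := by gcongr
    _ = q * (1 - p / 2) * #s := by ring

lemma card_filter_not_extendsIn_eq_zero (hK : Cl K) (hk : k ≤ #K)
    (S : Finset (Finset (Finset α))) : #{M ∈ S | ¬ ExtendsIn Cl k K M} = 0 := by
  rw [filter_false_of_mem fun M _ => not_not.2 (extendsIn_of_le hK hk), card_empty]

lemma card_filter_not_extendsIn_insert_le {e : Finset α} {q : ℝ} {S : Finset (Finset (Finset α))}
    (hK : (#{N ∈ S | ¬ ExtendsIn Cl k K N} : ℝ) ≤ q)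
    (he : e ∉ K → Cl (insert e K) → (#{N ∈ S | ¬ ExtendsIn Cl k (insert e K) N} : ℝ) ≤ q / 2) :
    (#{N ∈ S | ¬ ExtendsIn Cl k K (insert e N)} : ℝ) ≤
      if e ∉ K ∧ Cl (insert e K) then q / 2 else q := by
  split_ifs with h
  · refine le_trans ?_ (he h.1 h.2)
    exact_mod_cast card_le_card (monotone_filter_right _ fun N _ => mt ExtendsIn.of_insert)
  · refine le_trans ?_ hK
    exact_mod_cast card_le_card (monotone_filter_right _ fun N _ =>
      mt (ExtendsIn.mono · (subset_insert e N)))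

lemma card_filter_not_extendsIn_le_of_edgesAt {v : α} {q : ℝ} (hr : r ≠ 0) (hv : v ∈ U)
    (hU : #U = r * (n + 1)) (hq : 0 ≤ q)
    (hgood : p * #(edgesAt r U v) ≤ #{e ∈ edgesAt r U v | e ∉ K ∧ Cl (insert e K)})
    (hK : ∀ e ∈ edgesAt r U v,
      (#{N ∈ matchingsOn r (U \ e) | ¬ ExtendsIn Cl k K N} : ℝ) ≤ q * n.uniformBell r)
    (hinsert : ∀ e ∈ edgesAt r U v, e ∉ K → Cl (insert e K) →
      (#{N ∈ matchingsOn r (U \ e) | ¬ ExtendsIn Cl k (insert e K) N} : ℝ) ≤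
        q * n.uniformBell r / 2) :
    (#{M ∈ matchingsOn r U | ¬ ExtendsIn Cl k K M} : ℝ) ≤
      q * (1 - p / 2) * (n + 1).uniformBell r := by
  calc (#{M ∈ matchingsOn r U | ¬ ExtendsIn Cl k K M} : ℝ)
      = ∑ e ∈ edgesAt r U v,
          (#{N ∈ matchingsOn r (U \ e) | ¬ ExtendsIn Cl k K (insert e N)} : ℝ) := by
        rw [card_filter_matchingsOn_eq_sum hr hv, Nat.cast_sum]
    _ ≤ q * n.uniformBell r * (1 - p / 2) * #(edgesAt r U v) :=
        sum_le_of_half_on (by positivity)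
          (fun e he => card_filter_not_extendsIn_insert_le (hK e he) (hinsert e he)) hgood
    _ = q * (1 - p / 2) * (n + 1).uniformBell r := by
        rw [card_edgesAt hv hr, hU, Nat.uniformBell_succ_left, mul_add_one, mul_comm n r]
        push_cast
        ring

-- Exposing the edge at a suitable vertex enlarges the family with conditional probability at least
-- `p`. Since the bound halves each time this happens, each exposure multiplies its mean by at most
-- `1 - p / 2`.
lemma card_filter_not_extendsIn_le (hr : r ≠ 0) (hp : p ≤ 1)
    (hstep : ∀ U ⊆ V, #(V \ U) ≤ B → ∀ K, Cl K → #K < k →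
      ∃ v ∈ U, p * #(edgesAt r U v) ≤ #{e ∈ edgesAt r U v | e ∉ K ∧ Cl (insert e K)})
    (hUV : U ⊆ V) (hU : #U = r * n) (hB : #(V \ U) + r * t ≤ B) (hK : Cl K) :
    (#{M ∈ matchingsOn r U | ¬ ExtendsIn Cl k K M} : ℝ) ≤
      2 ^ k / 2 ^ #K * (1 - p / 2) ^ t * n.uniformBell r := by
  have hp' : 0 ≤ 1 - p / 2 := by linarith
  induction t generalizing U n K with
  | zero =>
    rcases le_or_gt k #K with hk | hk
    · rw [card_filter_not_extendsIn_eq_zero hK hk, Nat.cast_zero]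
      positivity
    · rw [← card_matchingsOn hr hU, pow_zero, mul_one]
      refine (Nat.cast_le.2 (card_filter_le _ _)).trans (le_mul_of_one_le_left (by positivity) ?_)
      rw [one_le_div (by positivity)]
      exact pow_le_pow_right₀ one_le_two hk.le
  | succ t ih =>
    rcases le_or_gt k #K with hk | hk
    · rw [card_filter_not_extendsIn_eq_zero hK hk, Nat.cast_zero]
      positivity
    obtain ⟨v, hv, hgood⟩ := hstep U hUV (by omega) K hK hk
    obtain ⟨n, rfl⟩ : ∃ n', n = n' + 1 :=
      Nat.exists_eq_succ_of_ne_zero (by rintro rfl; exact card_ne_zero_of_mem hv hU)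
    have hrest : ∀ e ∈ edgesAt r U v, #(U \ e) = r * n ∧ #(V \ (U \ e)) + r * t ≤ B := by
      intro e he
      obtain ⟨⟨heU, her⟩, -⟩ := mem_edgesAt.1 he
      have hle := card_le_card hUV
      rw [card_sdiff_of_subset hUV] at hB
      rw [card_sdiff_of_subset (sdiff_subset.trans hUV), card_sdiff_of_subset heU, her]
      simp only [hU, mul_add_one] at hB hle ⊢
      omega
    rw [pow_succ, ← mul_assoc]
    refine card_filter_not_extendsIn_le_of_edgesAt hr hv hU (by positivity) hgood
      (fun e he => ih (sdiff_subset.trans hUV) (hrest e he).1 (hrest e he).2 hK)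
      fun e he heK hCl => ?_
    refine (ih (sdiff_subset.trans hUV) (hrest e he).1 (hrest e he).2 hCl).trans_eq ?_
    rw [card_insert_of_notMem heK, pow_succ]
    ring

end Exposure

section LowerBound

lemma le_two_mul_mul_div {m n : ℕ} (hm : m ≠ 0) (hmn : m ≤ n) : n ≤ 2 * (m * (n / m)) := by
  have := Nat.div_add_mod n m
  have := Nat.mod_lt n (Nat.pos_of_ne_zero hm)
  have := Nat.mul_le_mul_left m (Nat.div_pos hmn (Nat.pos_of_ne_zero hm))
  omega

lemma two_pow_mul_one_sub_pow_le_exp {k T : ℕ} {p x : ℝ} (hp : p ≤ 1) (hk : k ≤ x + 1)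
    (hT : 2 * x ≤ p / 2 * T) : 2 ^ k * (1 - p / 2) ^ T ≤ Real.exp (1 - x) := by
  have htwo : (2 : ℝ) ≤ Real.exp 1 := by linarith [Real.add_one_le_exp 1]
  have hsub : 0 ≤ 1 - p / 2 := by linarith
  calc 2 ^ k * (1 - p / 2) ^ T ≤ Real.exp 1 ^ k * Real.exp (-(p / 2)) ^ T := by
        gcongr
        exact Real.one_sub_le_exp_neg _
    _ = Real.exp (k - p / 2 * T) := by
        rw [← Real.exp_nat_mul, ← Real.exp_nat_mul, ← Real.exp_add]
        ring_nf
    _ ≤ Real.exp (1 - x) := Real.exp_le_exp.2 (by linarith)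

variable {r : ℕ} [NeZero r] {β : Fin r → ℕ} {σ τ : ℕ → Bool} {d : Fin r}
  {P Q : Finset (Finset ℕ)} {n : ℕ}

lemma mul_card_edgesAt_le {m L : ℕ} {p : ℝ} {U : Finset ℕ} {v : ℕ} (hp : 0 ≤ p) (hv : v ∈ U)
    (hU : U ⊆ Icc 1 (r * n)) (hpL : p * (r * n) ^ (r - 1) ≤ (m / 2) * (L / 2) ^ (r - 1)) :
    p * #(edgesAt r U v) ≤ (m / 2) * (L / 2) ^ (r - 1) := by
  refine le_trans (mul_le_mul_of_nonneg_left ?_ hp) hpL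
  have hUn : #U - 1 ≤ r * n := by
    have := card_le_card hU
    rw [Nat.card_Icc, Nat.add_sub_cancel] at this
    omega
  rw [card_edgesAt hv (NeZero.ne r)]
  exact_mod_cast (Nat.choose_le_pow _ _).trans (Nat.pow_le_pow_left hUn _)

lemma card_filter_not_exists_isClique_le (hβ : Monotone β) (hP : HasShape r P β σ)
    (hQ : HasShape r Q β τ) (hσ : σ (β 0) = true) (hτ : τ (β 0) = true) (hd : σ (β d) ≠ τ (β d))
    {m L T k : ℕ} {p : ℝ} (hm : m ≠ 0) (hL : L ≠ 0) (hmL : m * L ≤ n) (hT : 8 * (r * T) ≤ m * L)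
    (hk : 4 * k ≤ m) (hp₀ : 0 ≤ p) (hp₁ : p ≤ 1)
    (hpL : p * (r * n) ^ (r - 1) ≤ (m / 2) * (L / 2) ^ (r - 1)) :
    (#{M ∈ matchingFamilies r n | ¬ ∃ K ⊆ M, IsClique r {P, Q} K ∧ k ≤ #K} : ℝ) ≤
      2 ^ k * (1 - p / 2) ^ T * #(matchingFamilies r n) := by
  have hr : r ≠ 0 := NeZero.ne r
  have hexpose := card_filter_not_extendsIn_le (r := r) (n := n) (k := k) (B := r * T) (t := T)
    (V := Icc 1 (r * n)) (U := Icc 1 (r * n)) (K := ∅) (Cl := IsTypedFamily β σ τ m L) hr hp₁ ?_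
    subset_rfl (by simp) (by simp) (isTypedFamily_empty hm)
  · rw [card_matchingFamilies hr, matchingFamilies_eq_matchingsOn hr]
    rw [card_empty, pow_zero, div_one] at hexpose
    refine le_trans (Nat.cast_le.2 (card_le_card (monotone_filter_right _ fun M _ => ?_))) hexpose
    refine mt fun ⟨N, hNM, hN, hkN⟩ => ?_
    rw [empty_union] at hN hkN
    exact ⟨N, hNM, hN.isClique hβ hP hQ, hkN⟩
  · intro U hU hUT K hK hKk
    obtain ⟨v, hv, hcount⟩ := exists_mul_pow_le_card_extensions hβ hσ hτ hd hL
      (fun a l => cell_subset hmL) (show 8 * #(Icc 1 (r * n) \ U) ≤ m * L by omega) hK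
      (by omega)
    exact ⟨v, hv, (mul_card_edgesAt_le hp₀ hv hU hpL).trans hcount⟩

lemma density_mul_pow_le {m : ℕ} (hm : m ≠ 0) (hmn : m ^ (r - 1) ≤ n) (hmn' : m ≤ n) :
    (m / (2 * (4 * r) ^ (r - 1) * n) : ℝ) * (r * n) ^ (r - 1) ≤
      (m / 2) * ((n / m : ℕ) / 2) ^ (r - 1) := by
  have hmL : (n : ℝ) ≤ 2 * (m * (n / m : ℕ)) := by exact_mod_cast le_two_mul_mul_div hm hmn'
  have hm₀ : (0 : ℝ) < m := by positivity
  have hn₀ : (0 : ℝ) < n := hm₀.trans_le (by exact_mod_cast hmn')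
  have hr₀ : (0 : ℝ) < r := by have := NeZero.pos r; positivity
  calc (m / (2 * (4 * r) ^ (r - 1) * n) : ℝ) * (r * n) ^ (r - 1)
      = m / 2 * ((n / 4) ^ (r - 1) / n) := by
        rw [mul_pow, mul_pow, div_pow]
        field_simp
    _ ≤ m / 2 * ((n / 4) ^ (r - 1) / m ^ (r - 1)) := by
        gcongr
        exact_mod_cast hmn
    _ = m / 2 * (n / (4 * m)) ^ (r - 1) := by rw [← div_pow, div_div]
    _ ≤ (m / 2) * ((n / m : ℕ) / 2) ^ (r - 1) := by
        refine mul_le_mul_of_nonneg_left (pow_le_pow_left₀ (by positivity) ?_ _) (by positivity)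
        rw [div_le_div_iff₀ (by positivity) two_pos]
        linarith

/-- A constant `c` such that cliques of size `c * n ^ (1 / (r - 1))` exist with high probability. -/
noncomputable def lowerConst (r : ℕ) : ℝ :=
  1 / (512 * r * (4 * r) ^ (r - 1))

lemma lowerConst_pos : 0 < lowerConst r := by
  have : (0 : ℝ) < r := Nat.cast_pos.2 (NeZero.pos r)
  rw [lowerConst]
  positivity

lemma lowerConst_le : lowerConst r ≤ 1 / 512 := by
  have hr : (1 : ℝ) ≤ r := Nat.one_le_cast.2 (NeZero.pos r)
  refine one_div_le_one_div_of_le (by norm_num) ?_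
  have hpow : (1 : ℝ) ≤ (4 * r) ^ (r - 1) := one_le_pow₀ (by linarith)
  nlinarith

lemma two_mul_lowerConst_mul_le {m : ℕ} {h : ℝ} (hm : h ≤ 2 * m) (hn : 16 * r ≤ n) :
    2 * (lowerConst r * h) ≤
      m / (2 * (4 * r) ^ (r - 1) * n) / 2 * (n / (16 * r) : ℕ) := by
  have hr₀ : 0 < r := NeZero.pos r
  have hT : (n : ℝ) ≤ 32 * r * (n / (16 * r) : ℕ) := by
    have := le_two_mul_mul_div (by positivity) hn
    rw [mul_assoc, ← mul_assoc 2, ← mul_assoc] at this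
    exact_mod_cast this
  have hn₀ : (0 : ℝ) < n := Nat.cast_pos.2 (by omega)
  calc 2 * (lowerConst r * h) ≤ 2 * (lowerConst r * (2 * m)) := by
        gcongr
        exact lowerConst_pos.le
    _ = m / (2 * (4 * r) ^ (r - 1) * n) / 2 * (n / (32 * r)) := by
        rw [lowerConst]
        field_simp
        ring
    _ ≤ m / (2 * (4 * r) ^ (r - 1) * n) / 2 * (n / (16 * r) : ℕ) := by
        gcongr
        rw [div_le_iff₀ (by positivity)]
        linarith

lemma card_filter_not_exists_isClique_le_exp (hβ : Monotone β) (hP : HasShape r P β σ)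
    (hQ : HasShape r Q β τ) (hσ : σ (β 0) = true) (hτ : τ (β 0) = true) (hd : σ (β d) ≠ τ (β d))
    (hr : 2 ≤ r) {h : ℝ} (hh : 6 ≤ h) (hn : h ^ (r - 1) = n) (hnr : 16 * r ≤ n) :
    (#{M ∈ matchingFamilies r n |
        ¬ ∃ K ⊆ M, IsClique r {P, Q} K ∧ ⌈lowerConst r * h⌉₊ ≤ #K} : ℝ) ≤
      Real.exp (1 - lowerConst r * h) * #(matchingFamilies r n) := by
  have hc₀ : 0 ≤ lowerConst r * h := mul_nonneg lowerConst_pos.le (by linarith)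
  have hc : lowerConst r * h ≤ 1 / 512 * h := by gcongr; exact lowerConst_le
  have hhn : h ≤ n := hn ▸ le_self_pow₀ (by linarith) (by omega)
  set m := ⌊h⌋₊
  have hmh : (m : ℝ) ≤ h := Nat.floor_le (by linarith)
  have hhm : h < m + 1 := Nat.lt_floor_add_one h
  have hm₀ : m ≠ 0 := by rintro hm; rw [hm, Nat.cast_zero] at hhm; linarith
  have hmn : m ≤ n := by exact_mod_cast hmh.trans hhn
  have hmn' : m ^ (r - 1) ≤ n := by
    rw [← Nat.cast_le (α := ℝ), ← hn, Nat.cast_pow]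
    exact pow_le_pow_left₀ (by positivity) hmh _
  have hT : 8 * (r * (n / (16 * r))) ≤ m * (n / m) := by
    have := Nat.mul_div_le n (16 * r)
    have := le_two_mul_mul_div hm₀ hmn
    linarith
  have hk : (⌈lowerConst r * h⌉₊ : ℝ) ≤ lowerConst r * h + 1 := (Nat.ceil_lt_add_one hc₀).le
  have hkm : 4 * ⌈lowerConst r * h⌉₊ ≤ m := by
    rw [← Nat.cast_le (α := ℝ)]
    push_cast
    linarith
  have hp : (m / (2 * (4 * r) ^ (r - 1) * n) : ℝ) ≤ 1 := by
    refine div_le_one_of_le₀ ?_ (by positivity)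
    have hpow : (1 : ℝ) ≤ (4 * r) ^ (r - 1) := one_le_pow₀ (by norm_cast; omega)
    nlinarith
  refine (card_filter_not_exists_isClique_le hβ hP hQ hσ hτ hd hm₀ (Nat.div_pos hmn (by omega)).ne'
    (Nat.mul_div_le n m) hT hkm (by positivity) hp (density_mul_pow_le hm₀ hmn' hmn)).trans ?_
  gcongr
  exact two_pow_mul_one_sub_pow_le_exp hp hk (two_mul_lowerConst_mul_le (by linarith) hnr)

end LowerBound

section CliqueNumber

variable {r k : ℕ} {Ps : Set (Finset (Finset ℕ))} {M K : Finset (Finset ℕ)}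

lemma IsClique.subset (hK : IsClique r Ps K) {L : Finset (Finset ℕ)} (hL : L ⊆ K) :
    IsClique r Ps L :=
  ⟨fun e he => hK.1 e (hL he), fun e he f hf => hK.2.1 e (hL he) f (hL hf),
    fun e he f hf => hK.2.2 e (hL he) f (hL hf)⟩

lemma bddAbove_card_isClique (r : ℕ) (Ps : Set (Finset (Finset ℕ))) (M : Finset (Finset ℕ)) :
    BddAbove {k | ∃ K ⊆ M, IsClique r Ps K ∧ #K = k} :=
  ⟨#M, by rintro _ ⟨K, hKM, -, rfl⟩; exact card_le_card hKM⟩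

lemma IsClique.card_le_zClique (hK : IsClique r Ps K) (hKM : K ⊆ M) : #K ≤ zClique r Ps M :=
  le_csSup (bddAbove_card_isClique r Ps M) ⟨K, hKM, hK, rfl⟩

lemma exists_isClique_card_eq_of_le_zClique (hk : k ≤ zClique r Ps M) :
    ∃ K ⊆ M, IsClique r Ps K ∧ #K = k := by
  have hne : {k | ∃ K ⊆ M, IsClique r Ps K ∧ #K = k}.Nonempty :=
    ⟨0, ∅, empty_subset M, by simp [IsClique], rfl⟩
  obtain ⟨K, hKM, hK, hcard⟩ := Nat.sSup_mem hne (bddAbove_card_isClique r Ps M)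
  obtain ⟨L, hLK, hL⟩ := exists_subset_card_eq (hk.trans_eq hcard.symm)
  exact ⟨L, hLK.trans hKM, hK.subset hLK, hL⟩

end CliqueNumber

section Probability

variable {r n : ℕ} {A B : Finset (Finset ℕ) → Prop}

lemma prob_nonneg (r n : ℕ) (A : Finset (Finset ℕ) → Prop) : 0 ≤ prob r n A := by
  unfold prob
  positivity

lemma prob_le_one (r n : ℕ) (A : Finset (Finset ℕ) → Prop) : prob r n A ≤ 1 :=
  div_le_one_of_le₀ (by exact_mod_cast card_filter_le _ _) (by positivity)

lemma prob_le_of_card_le [DecidablePred B] {q : ℝ} (hr : r ≠ 0) (hAB : ∀ M, A M → B M)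
    (hq : (#{M ∈ matchingFamilies r n | B M} : ℝ) ≤ q * #(matchingFamilies r n)) :
    prob r n A ≤ q := by
  rw [prob, div_le_iff₀ (by exact_mod_cast card_matchingFamilies_pos hr)]
  refine le_trans ?_ hq
  exact_mod_cast card_le_card (monotone_filter_right _ fun M _ => hAB M)

lemma one_sub_prob_not_sub_prob_not_le (hr : r ≠ 0) (A B : Finset (Finset ℕ) → Prop) :
    1 - prob r n (fun M => ¬ A M) - prob r n (fun M => ¬ B M) ≤ prob r n fun M => A M ∧ B M := by
  have hpos : (0 : ℝ) < #(matchingFamilies r n) := by exact_mod_cast card_matchingFamilies_pos hr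
  unfold prob
  rw [sub_sub, ← add_div, sub_le_iff_le_add, ← add_div, le_div_iff₀ hpos, one_mul]
  norm_cast
  refine le_trans (card_le_card fun M hM => ?_)
    ((card_union_le _ _).trans (Nat.add_le_add_left (card_union_le _ _) _))
  simp only [mem_union, mem_filter]
  tauto

lemma tendsto_prob_and {A B : ℕ → Finset (Finset ℕ) → Prop} (hr : r ≠ 0)
    (hA : Filter.Tendsto (fun n => prob r n fun M => ¬ A n M) Filter.atTop (nhds 0))
    (hB : Filter.Tendsto (fun n => prob r n fun M => ¬ B n M) Filter.atTop (nhds 0)) :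
    Filter.Tendsto (fun n => prob r n fun M => A n M ∧ B n M) Filter.atTop (nhds 1) := by
  have hlim := (tendsto_const_nhds (x := (1 : ℝ)).sub hA).sub hB
  rw [sub_zero, sub_zero] at hlim
  exact tendsto_of_tendsto_of_tendsto_of_le_of_le hlim tendsto_const_nhds
    (fun n => one_sub_prob_not_sub_prob_not_le hr (A n) (B n)) fun n => prob_le_one r n _

end Probability

section Asymptotics

variable {r : ℕ} {β : Fin r → ℕ} {σ τ : ℕ → Bool} {P Q : Finset (Finset ℕ)} {d : Fin r}

lemma rpow_one_div_sub_one_pow (hr : 2 ≤ r) (n : ℕ) :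
    ((n : ℝ) ^ ((1 : ℝ) / ((r : ℝ) - 1))) ^ (r - 1) = n := by
  rw [one_div, ← Nat.cast_pred (by omega)]
  exact Real.rpow_inv_natCast_pow n.cast_nonneg (by omega)

lemma tendsto_rpow_one_div_sub_one (hr : 2 ≤ r) :
    Filter.Tendsto (fun n : ℕ => (n : ℝ) ^ ((1 : ℝ) / ((r : ℝ) - 1)))
      Filter.atTop Filter.atTop := by
  have : (2 : ℝ) ≤ r := by exact_mod_cast hr
  exact (tendsto_rpow_atTop (one_div_pos.2 (by linarith))).comp tendsto_natCast_atTop_atTop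

lemma tendsto_prob_not_mul_rpow_le_zClique [NeZero r] (hβ : Monotone β) (hP : HasShape r P β σ)
    (hQ : HasShape r Q β τ) (hσ : σ (β 0) = true) (hτ : τ (β 0) = true)
    (hd : σ (β d) ≠ τ (β d)) (hr : 2 ≤ r) :
    Filter.Tendsto (fun n : ℕ => prob r n fun M =>
        ¬ lowerConst r * (n : ℝ) ^ ((1 : ℝ) / ((r : ℝ) - 1)) ≤ zClique r {P, Q} M)
      Filter.atTop (nhds 0) := by
  have hh := tendsto_rpow_one_div_sub_one hr
  have hexp : Filter.Tendsto
      (fun n : ℕ => Real.exp (1 - lowerConst r * (n : ℝ) ^ ((1 : ℝ) / ((r : ℝ) - 1))))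
      Filter.atTop (nhds 0) :=
    Real.tendsto_exp_atBot.comp
      (Filter.tendsto_atBot_add_const_left _ _
        (Filter.tendsto_neg_atTop_atBot.comp (hh.const_mul_atTop lowerConst_pos)))
  refine squeeze_zero' (.of_forall fun n => prob_nonneg r n _) ?_ hexp
  filter_upwards [hh.eventually_ge_atTop 6, Filter.eventually_ge_atTop (16 * r)] with n hn6 hnr
  refine prob_le_of_card_le (NeZero.ne r) ?_ (card_filter_not_exists_isClique_le_exp hβ hP hQ hσ hτ
    hd hr hn6 (rpow_one_div_sub_one_pow hr n) hnr)
  rintro M hM ⟨K, hKM, hK, hcard⟩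
  exact hM ((Nat.ceil_le.1 hcard).trans (by exact_mod_cast hK.card_le_zClique hKM))

lemma tendsto_prob_not_zClique_le_mul_rpow [NeZero r] (hP : HasShape r P β σ)
    (hQ : HasShape r Q β τ) (hσ : σ (β 0) = true) (hτ : τ (β 0) = true)
    (hd : σ (β d) ≠ τ (β d)) (hr : 2 ≤ r) {c : ℝ} (hc : 2 * (r.factorial * Real.exp r) ≤ c) :
    Filter.Tendsto (fun n : ℕ => prob r n fun M =>
        ¬ (zClique r {P, Q} M : ℝ) ≤ c * (n : ℝ) ^ ((1 : ℝ) / ((r : ℝ) - 1)))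
      Filter.atTop (nhds 0) := by
  have hc₁ : 1 ≤ c := by
    have : (1 : ℝ) ≤ r.factorial := by exact_mod_cast r.factorial_pos
    have := Real.one_le_exp r.cast_nonneg
    nlinarith
  set k : ℕ → ℕ := fun n => ⌊c * (n : ℝ) ^ ((1 : ℝ) / ((r : ℝ) - 1))⌋₊ + 1
  have hk : Filter.Tendsto k Filter.atTop Filter.atTop :=
    (Filter.tendsto_add_atTop_nat 1).comp (tendsto_nat_floor_atTop.comp
      ((tendsto_rpow_one_div_sub_one hr).const_mul_atTop (by linarith)))
  refine squeeze_zero' (.of_forall fun n => prob_nonneg r n _) ?_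
    ((tendsto_pow_atTop_nhds_zero_of_lt_one (r := (1 / 2 : ℝ)) (by norm_num) (by norm_num)).comp hk)
  filter_upwards [Filter.eventually_ne_atTop 0] with n hn
  refine prob_le_of_card_le (B := fun M => ∃ K ⊆ M, IsClique r {P, Q} K ∧ #K = k n)
    (NeZero.ne r) (fun M hM => exists_isClique_card_eq_of_le_zClique ?_) ?_
  · exact Nat.succ_le_of_lt ((Nat.floor_lt (by positivity)).2 (not_le.1 hM))
  · have hmul : 2 * (r.factorial * Real.exp r) * n ≤ (k n : ℝ) ^ (r - 1) := calc
      2 * (r.factorial * Real.exp r) * n ≤ c ^ (r - 1) * n := by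
        gcongr
        exact hc.trans (le_self_pow₀ hc₁ (by omega))
      _ = (c * (n : ℝ) ^ ((1 : ℝ) / ((r : ℝ) - 1))) ^ (r - 1) := by
        rw [mul_pow, rpow_one_div_sub_one_pow hr]
      _ ≤ (k n : ℝ) ^ (r - 1) := by
        gcongr
        exact (Nat.lt_floor_add_one _).le.trans_eq (Nat.cast_succ _).symm
    have := card_filter_exists_isClique_mul_two_pow_le hP hQ hσ hτ hd hn hmul
    rw [Function.comp_apply, one_div, inv_pow, inv_mul_eq_div, le_div_iff₀ (by positivity)]
    exact this

end Asymptotics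

/-- **Theorem (harmonious pairs).** For every `r ≥ 2` and every harmonious pair `{P, Q}` of
distinct `r`-patterns, a.a.s. `z_{{P,Q}}(RM_n^(r)) = Θ(n^(1/(r−1)))`. -/
theorem aas_harmonious_pair (r : ℕ) (hr : 2 ≤ r) (P Q : Finset (Finset ℕ))
    (hP : IsOrderedMatching r 2 P) (hQ : IsOrderedMatching r 2 Q)
    (hPQ : Harmonious r P Q) :
    ∃ c₁ c₂ : ℝ, 0 < c₁ ∧ 0 < c₂ ∧
      Filter.Tendsto
        (fun n : ℕ => prob r n (fun M =>
          c₁ * (n : ℝ) ^ ((1 : ℝ) / ((r : ℝ) - 1)) ≤ (zClique r {P, Q} M : ℝ) ∧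
          (zClique r {P, Q} M : ℝ) ≤ c₂ * (n : ℝ) ^ ((1 : ℝ) / ((r : ℝ) - 1))))
        Filter.atTop (nhds 1) := by
  have : NeZero r := ⟨by omega⟩
  obtain ⟨hne, -, -, lam, hlamP, hlamQ⟩ := hPQ
  obtain ⟨σ, hPσ, hσ⟩ := exists_hasShape_of_hasComposition hP hlamP
  obtain ⟨τ, hQτ, hτ⟩ := exists_hasShape_of_hasComposition hQ hlamQ
  obtain ⟨d, hd⟩ : ∃ d : Fin r, σ (blockIndex lam d) ≠ τ (blockIndex lam d) := by
    by_contra! hsign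
    exact hne (hPσ.unique hQτ hsign)
  have hβ : Monotone fun a : Fin r => blockIndex lam a :=
    (blockIndex_monotone lam).comp Fin.val_strictMono.monotone
  refine ⟨lowerConst r, 2 * (r.factorial * Real.exp r), lowerConst_pos, by positivity,
    tendsto_prob_and this.ne ?_ ?_⟩
  · exact tendsto_prob_not_mul_rpow_le_zClique hβ hPσ hQτ hσ hτ hd hr
  · exact tendsto_prob_not_zClique_le_mul_rpow hPσ hQτ hσ hτ hd hr le_rfl
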